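/- arXiv:1510.05440 — 2 statements merged into one kernel-verified Lean document; each statement's English description precedes it below -/
import Mathlib

section
/- Suppose g(r) = o(e^{-c r}) as r → ∞ for some c > 0, and fix γ > 0. Let L_n(γ) be the length (in the toroidal metric) of the longest edge of the graph G_n(r̂_n(γ)) (with L_n(γ) := 0 if there are no edges). Then almost surely, limsup_{n→∞} L_n(γ)/(r̂_n(γ)·log n) ≤ 1/c. -/
open MeasureTheory ProbabilityTheory Filter Set

noncomputable section

namespace RCM

/-- The toroidal metric on the unit cube. -/
def torusDist {d : ℕ} (x y : EuclideanSpace ℝ (Fin d)) : ℝ :=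
  ⨅ z : Fin d → ℤ, ‖x - y - (WithLp.equiv 2 (Fin d → ℝ)).symm (fun i => (z i : ℝ))‖

/-- The half-open unit cube `S = (-1/2, 1/2]^d`. -/
def cube (d : ℕ) : Set (EuclideanSpace ℝ (Fin d)) :=
  {x | ∀ i, x i ∈ Set.Ioc (-(1/2) : ℝ) (1/2)}

/-- The random connection model: i.i.d. uniform points `X`, coupled Poisson counts `N`,
i.i.d. uniform edge variables `U`, with the three families mutually independent, and a
non-increasing connection function `g : [0,∞) → [0,1]` with finite positive integral `α`. -/
structure Model (d : ℕ) {Ω : Type*} [MeasurableSpace Ω] (P : Measure Ω) where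
  g : ℝ → ℝ
  α : ℝ
  X : ℕ → Ω → EuclideanSpace ℝ (Fin d)
  N : ℕ → Ω → ℕ
  U : ℕ → ℕ → Ω → ℝ
  g_antitone : AntitoneOn g (Set.Ici 0)
  g_mem : ∀ r : ℝ, 0 ≤ r → g r ∈ Set.Icc (0 : ℝ) 1
  g_integrable : MeasureTheory.Integrable (fun x : EuclideanSpace ℝ (Fin d) => g ‖x‖)
  α_def : α = ∫ x : EuclideanSpace ℝ (Fin d), g ‖x‖
  α_pos : 0 < α
  X_meas : ∀ i, Measurable (X i)
  X_unif : ∀ i : ℕ, 1 ≤ i → Measure.map (X i) P = volume.restrict (cube d)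
  X_indep : iIndepFun
    (fun i : {i : ℕ // 1 ≤ i} => X i) P
  N_meas : ∀ n, Measurable (N n)
  N_mono : ∀ ω, Monotone fun n => N n ω
  N_poisson : ∀ n k : ℕ,
    P {ω | N n ω = k} = ENNReal.ofReal (Real.exp (-(n : ℝ)) * (n : ℝ) ^ k / k.factorial)
  U_meas : ∀ i j, Measurable (U i j)
  U_unif : ∀ i j : ℕ, 1 ≤ i → i < j →
    Measure.map (U i j) P = volume.restrict (Set.Icc (0 : ℝ) 1)
  U_indep : iIndepFun
    (fun p : {p : ℕ × ℕ // 1 ≤ p.1 ∧ p.1 < p.2} => U p.1.1 p.1.2) P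
  families_indep : iIndep
    (![MeasurableSpace.comap (fun ω => fun i : ℕ => X i ω) inferInstance,
       MeasurableSpace.comap (fun ω => fun n : ℕ => N n ω) inferInstance,
       MeasurableSpace.comap (fun ω => fun p : ℕ × ℕ => U p.1 p.2 ω) inferInstance]) P

variable {d : ℕ} {Ω : Type*} [MeasurableSpace Ω] {P : Measure Ω}

/-- Adjacency in the graph `G_n(r)`: vertices `1 ≤ i,j ≤ N_n` are joined iff
`U_{ij} ≤ g(dist(X_i,X_j)/r)`. -/
def adj (M : Model d P) (n : ℕ) (r : ℝ) (ω : Ω) (i j : ℕ) : Prop :=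
  i ≠ j ∧ 1 ≤ i ∧ 1 ≤ j ∧ i ≤ M.N n ω ∧ j ≤ M.N n ω ∧
    M.U (min i j) (max i j) ω ≤ M.g (torusDist (M.X i ω) (M.X j ω) / r)

/-- The degree of vertex `i` in `G_n(r)`. -/
def deg (M : Model d P) (n : ℕ) (r : ℝ) (ω : Ω) (i : ℕ) : ℕ :=
  {j : ℕ | adj M n r ω i j}.ncard

/-- `W_n(r)`, the number of isolated vertices of `G_n(r)`. -/
def isolatedCount (M : Model d P) (n : ℕ) (r : ℝ) (ω : Ω) : ℕ :=
  {i : ℕ | 1 ≤ i ∧ i ≤ M.N n ω ∧ deg M n r ω i = 0}.ncard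


/-- `r̂_n(γ)` defined by `r̂_n(γ)^d = γ log n / (α n)`. -/
def rhat (M : Model d P) (γ : ℝ) (n : ℕ) : ℝ :=
  (γ * Real.log n / (M.α * n)) ^ ((1 : ℝ) / d)

/-- `d_n`, the critical parameter for absence of isolated nodes. -/
def critRadius (M : Model d P) (n : ℕ) (ω : Ω) : ℝ :=
  sInf {r : ℝ | 0 < r ∧ isolatedCount M n r ω = 0}

/-- The maximum vertex degree `Δ_n` of `G_n(r)`. -/
def maxDeg (M : Model d P) (n : ℕ) (r : ℝ) (ω : Ω) : ℕ :=
  (Finset.Icc 1 (M.N n ω)).sup (deg M n r ω)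

/-- The minimum vertex degree `δ_n` of `G_n(r)`. -/
def minDeg (M : Model d P) (n : ℕ) (r : ℝ) (ω : Ω) : ℕ :=
  sInf {k : ℕ | ∃ i, 1 ≤ i ∧ i ≤ M.N n ω ∧ deg M n r ω i = k}

/-- The length (toroidal metric) of the longest edge of `G_n(r)` (`0` if there are no edges). -/
def longestEdge (M : Model d P) (n : ℕ) (r : ℝ) (ω : Ω) : ℝ :=
  sSup ({0} ∪ {t : ℝ | ∃ i j, adj M n r ω i j ∧ t = torusDist (M.X i ω) (M.X j ω)})

/-- Connectivity of `G_n(r)`: any two vertices are joined by a path. -/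
def connectedGraph (M : Model d P) (n : ℕ) (r : ℝ) (ω : Ω) : Prop :=
  ∀ i j : ℕ, 1 ≤ i → i ≤ M.N n ω → 1 ≤ j → j ≤ M.N n ω →
    Relation.ReflTransGen (adj M n r ω) i j

/-- `H(x) = 1 - x + x log x` (with `H(0) = 1`, since `log 0 = 0` in Lean). -/
def H (x : ℝ) : ℝ := 1 - x + x * Real.log x

/-- The inverse of the restriction of `H` to `[1, ∞)`. -/
def Hplusinv (y : ℝ) : ℝ := sInf {x : ℝ | 1 ≤ x ∧ y ≤ H x}

/-- The inverse of the restriction of `H` to `[0, 1]`. -/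
def Hminusinv (y : ℝ) : ℝ := sInf {x : ℝ | 0 ≤ x ∧ H x ≤ y}

/-- The standard normal distribution function. -/
def stdNormalCDF (x : ℝ) : ℝ :=
  ∫ t in Set.Iic x, Real.exp (-t ^ 2 / 2) / Real.sqrt (2 * Real.pi)

/-- The integer shifts that suffice to realise the toroidal distance between points of the cube. -/
def shifts (d : ℕ) : Finset (Fin d → ℤ) := Fintype.piFinset fun _ => Finset.Icc (-1) 1

/-- The points `x` and `y` are within distance `s` of each other up to a shift in `shifts d`. -/
def Near (s : ℝ) (x y : EuclideanSpace ℝ (Fin d)) : Prop :=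
  ∃ z ∈ shifts d, ‖x - y - (WithLp.equiv 2 (Fin d → ℝ)).symm (fun i => (z i : ℝ))‖ ≤ s

lemma torusDist_nonneg (x y : EuclideanSpace ℝ (Fin d)) : 0 ≤ torusDist x y :=
  Real.iInf_nonneg fun _ => norm_nonneg _

lemma near_torusDist {x y : EuclideanSpace ℝ (Fin d)} (hx : x ∈ cube d) (hy : y ∈ cube d) :
    Near (torusDist x y) x y := by
  refine ⟨fun i => round (x i - y i), ?_, ?_⟩
  · rw [shifts, Fintype.mem_piFinset]
    intro i
    obtain ⟨hx1, hx2⟩ := hx i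
    obtain ⟨hy1, hy2⟩ := hy i
    rw [Finset.mem_Icc, round_eq, Int.le_floor, ← Int.lt_add_one_iff, Int.floor_lt]
    push_cast
    constructor <;> linarith
  · refine le_ciInf fun z => ?_
    rw [EuclideanSpace.norm_eq, EuclideanSpace.norm_eq]
    gcongr with i
    simpa using round_le (x i - y i) (z i)

lemma Near.mono {s t : ℝ} (hst : s ≤ t) {x y : EuclideanSpace ℝ (Fin d)} (h : Near s x y) :
    Near t x y :=
  let ⟨z, hz, hle⟩ := h
  ⟨z, hz, hle.trans hst⟩

lemma measurableSet_near (s : ℝ) :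
    MeasurableSet {p : EuclideanSpace ℝ (Fin d) × EuclideanSpace ℝ (Fin d) | Near s p.1 p.2} := by
  have : {p : EuclideanSpace ℝ (Fin d) × EuclideanSpace ℝ (Fin d) | Near s p.1 p.2} =
      ⋃ z ∈ shifts d, {p | ‖p.1 - p.2 -
        (WithLp.equiv 2 (Fin d → ℝ)).symm (fun i => (z i : ℝ))‖ ≤ s} := by
    ext p; simp [Near]
  rw [this]
  refine Finset.measurableSet_biUnion _ fun z _ => measurableSet_le ?_ measurable_const
  fun_prop

lemma volume_near_le {s : ℝ} (hs : 0 ≤ s) (y : EuclideanSpace ℝ (Fin d)) :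
    volume {x | Near s x y} ≤ ENNReal.ofReal ((shifts d).card *
      volume.real (Metric.ball (0 : EuclideanSpace ℝ (Fin d)) 1) * s ^ d) := by
  have : {x | Near s x y} ⊆ ⋃ z ∈ shifts d,
      Metric.closedBall (y + (WithLp.equiv 2 (Fin d → ℝ)).symm (fun i => (z i : ℝ))) s := by
    rintro x ⟨z, hz, hle⟩
    simp only [mem_iUnion]
    exact ⟨z, hz, by rwa [mem_closedBall_iff_norm, ← sub_sub]⟩
  refine (measure_mono this).trans <| (measure_biUnion_finset_le _ _).trans ?_
  simp_rw [Measure.addHaar_closedBall volume _ hs]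
  rw [Finset.sum_const, nsmul_eq_mul, ENNReal.ofReal_mul (by positivity),
    ENNReal.ofReal_mul (by positivity), ENNReal.ofReal_natCast, ofReal_measureReal,
    finrank_euclideanSpace_fin, mul_assoc, mul_comm (ENNReal.ofReal _)]

lemma measure_near_le [IsProbabilityMeasure P] (M : Model d P) {i j : ℕ} (hi : 1 ≤ i)
    (hj : 1 ≤ j) (hij : i ≠ j) {s : ℝ} (hs : 0 ≤ s) :
    P {ω | Near s (M.X i ω) (M.X j ω)} ≤ ENNReal.ofReal ((shifts d).card *
      volume.real (Metric.ball (0 : EuclideanSpace ℝ (Fin d)) 1) * s ^ d) := by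
  have hind : IndepFun (M.X i) (M.X j) P :=
    M.X_indep.indepFun (i := ⟨i, hi⟩) (j := ⟨j, hj⟩) (by simpa using hij)
  have hmap := (indepFun_iff_map_prod_eq_prod_map_map (M.X_meas i).aemeasurable
    (M.X_meas j).aemeasurable).1 hind
  have := Measure.isProbabilityMeasure_map (μ := P) (M.X_meas i).aemeasurable
  have := Measure.isProbabilityMeasure_map (μ := P) (M.X_meas j).aemeasurable
  have h : P {ω | Near s (M.X i ω) (M.X j ω)} =
      (P.map fun ω => (M.X i ω, M.X j ω)) {p | Near s p.1 p.2} := by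
    rw [Measure.map_apply ((M.X_meas i).prodMk (M.X_meas j)) (measurableSet_near s)]
    rfl
  rw [h, hmap, Measure.prod_apply_symm (measurableSet_near s)]
  refine (lintegral_mono fun y => ?_).trans (by rw [lintegral_const, measure_univ, mul_one])
  rw [M.X_unif i hi]
  exact (Measure.restrict_apply_le _ _).trans (volume_near_le hs y)

lemma measure_U_le (M : Model d P) {i j : ℕ} (hi : 1 ≤ i) (hj : 1 ≤ j) (hij : i ≠ j) (v : ℝ) :
    P {ω | M.U (min i j) (max i j) ω ≤ v} ≤ ENNReal.ofReal v := by
  have h := M.U_unif (min i j) (max i j) (le_min hi hj) (by omega)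
  have h' : P {ω | M.U (min i j) (max i j) ω ≤ v} =
      (P.map (M.U (min i j) (max i j))) (Iic v) := by
    rw [Measure.map_apply (M.U_meas _ _) measurableSet_Iic]
    rfl
  rw [h', h, Measure.restrict_apply measurableSet_Iic]
  calc volume (Iic v ∩ Icc 0 1) ≤ volume (Icc 0 v) :=
        measure_mono fun x hx => ⟨hx.2.1, hx.1⟩
    _ = ENNReal.ofReal v := by simp

lemma measure_U_near_eq (M : Model d P) (i j k l : ℕ) (v s : ℝ) :
    P ({ω | M.U k l ω ≤ v} ∩ {ω | Near s (M.X i ω) (M.X j ω)}) =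
      P {ω | M.U k l ω ≤ v} * P {ω | Near s (M.X i ω) (M.X j ω)} := by
  have h := M.families_indep.indep (i := 2) (j := 0) (by decide)
  refine (Indep_iff _ _ _).1 h _ _ ?_ ?_
  · exact ⟨{u | u (k, l) ≤ v}, measurableSet_le (measurable_pi_apply _) measurable_const, rfl⟩
  · exact ⟨(fun x : ℕ → EuclideanSpace ℝ (Fin d) => (x i, x j)) ⁻¹' {p | Near s p.1 p.2},
      ((measurable_pi_apply i).prodMk (measurable_pi_apply j)) (measurableSet_near s), rfl⟩

/-- Outside this event, and with the points in the cube, the edge between `i` and `j` at scale `r`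
has length at most `t * r`, for `t ≤ T`. -/
def longEdgeEvent (M : Model d P) (r t T : ℝ) (i j : ℕ) : Set Ω :=
  ({ω | M.U (min i j) (max i j) ω ≤ M.g t} ∩ {ω | Near (T * r) (M.X i ω) (M.X j ω)}) ∪
    {ω | M.U (min i j) (max i j) ω ≤ M.g T}

lemma measure_longEdgeEvent_le [IsProbabilityMeasure P] (M : Model d P) {r t T : ℝ} (hr : 0 ≤ r)
    (ht : 0 ≤ t) (hT : 0 ≤ T) {i j : ℕ} (hi : 1 ≤ i) (hj : 1 ≤ j) (hij : i ≠ j) :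
    P (longEdgeEvent M r t T i j) ≤ ENNReal.ofReal (M.g t * ((shifts d).card *
      volume.real (Metric.ball (0 : EuclideanSpace ℝ (Fin d)) 1) * (T * r) ^ d) + M.g T) := by
  have hgt := (M.g_mem t ht).1
  have hgT := (M.g_mem T hT).1
  refine (measure_union_le _ _).trans ?_
  rw [measure_U_near_eq, ENNReal.ofReal_add (by positivity) hgT, ENNReal.ofReal_mul hgt]
  gcongr
  · exact measure_U_le M hi hj hij _
  · exact measure_near_le M hi hj hij (by positivity)
  · exact measure_U_le M hi hj hij _

lemma torusDist_le_of_notMem_longEdgeEvent (M : Model d P) {r t T : ℝ} (hr : 0 < r) (ht : 0 ≤ t)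
    (hT : 0 ≤ T) {i j : ℕ} {ω : Ω} (hi : M.X i ω ∈ cube d) (hj : M.X j ω ∈ cube d)
    (hU : M.U (min i j) (max i j) ω ≤ M.g (torusDist (M.X i ω) (M.X j ω) / r))
    (h : ω ∉ longEdgeEvent M r t T i j) : torusDist (M.X i ω) (M.X j ω) ≤ t * r := by
  by_contra! hlt
  have hdiv : 0 ≤ torusDist (M.X i ω) (M.X j ω) / r := div_nonneg (torusDist_nonneg _ _) hr.le
  refine h ?_
  rcases le_total (torusDist (M.X i ω) (M.X j ω)) (T * r) with hle | hle
  · refine Or.inl ⟨hU.trans (M.g_antitone ht hdiv ?_), (near_torusDist hi hj).mono hle⟩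
    rw [le_div_iff₀ hr]
    exact hlt.le
  · refine Or.inr (hU.trans (M.g_antitone hT hdiv ?_))
    rwa [le_div_iff₀ hr]

lemma ae_X_mem_cube (M : Model d P) : ∀ᵐ ω ∂P, ∀ i, 1 ≤ i → M.X i ω ∈ cube d := by
  have hmeas : MeasurableSet (cube d) := by
    have : cube d = ⋂ i, (fun x : EuclideanSpace ℝ (Fin d) => x i) ⁻¹' Ioc (-(1/2)) (1/2) := by
      ext; simp [cube]
    rw [this]
    exact MeasurableSet.iInter fun i => measurableSet_Ioc.preimage (by fun_prop)
  rw [ae_all_iff]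
  intro i
  by_cases hi : 1 ≤ i
  · have h : ∀ᵐ x ∂(P.map (M.X i)), x ∈ cube d := by
      rw [M.X_unif i hi]
      exact ae_restrict_mem hmeas
    filter_upwards [ae_of_ae_map (M.X_meas i).aemeasurable h] with ω hω _ using hω
  · exact Eventually.of_forall fun ω h => absurd h hi

lemma lintegral_two_pow_N (M : Model d P) (n : ℕ) :
    ∫⁻ ω, 2 ^ M.N n ω ∂P = ENNReal.ofReal (Real.exp n) := by
  have h1 : ∫⁻ ω, 2 ^ M.N n ω ∂P = ∫⁻ k, (2 : ENNReal) ^ k ∂(P.map (M.N n)) :=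
    (lintegral_map (f := fun k : ℕ => (2 : ENNReal) ^ k) (by fun_prop) (M.N_meas n)).symm
  have hs : HasSum (fun k : ℕ => Real.exp (-(n : ℝ)) * ((2 * n : ℝ) ^ k / k.factorial))
      (Real.exp n) := by
    have := (NormedSpace.expSeries_div_hasSum_exp (2 * n : ℝ)).mul_left (Real.exp (-(n : ℝ)))
    rwa [← Real.exp_eq_exp_ℝ, ← Real.exp_add,
      show -(n : ℝ) + 2 * n = n by ring] at this
  rw [h1, lintegral_countable', ← hs.tsum_eq, ENNReal.ofReal_tsum_of_nonneg
    (fun k => by positivity) hs.summable]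
  refine tsum_congr fun k => ?_
  rw [Measure.map_apply (M.N_meas n) (measurableSet_singleton k)]
  have := M.N_poisson n k
  rw [show M.N n ⁻¹' {k} = {ω | M.N n ω = k} from rfl, this,
    show (2 : ENNReal) ^ k = ENNReal.ofReal (2 ^ k) by
      rw [ENNReal.ofReal_pow (by norm_num)]; simp, ← ENNReal.ofReal_mul (by positivity)]
  congr 1
  rw [mul_pow]
  ring

lemma ae_eventually_N_le (M : Model d P) : ∀ᵐ ω ∂P, ∀ᶠ n in atTop, M.N n ω ≤ 2 * n := by
  have hbound (n : ℕ) : P {ω | ¬ M.N n ω ≤ 2 * n} ≤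
      ENNReal.ofReal ((Real.exp 1 / 4) ^ n) := by
    have hmarkov := mul_meas_ge_le_lintegral₀ (μ := P) (f := fun ω => (2 : ENNReal) ^ M.N n ω)
      (((by fun_prop : Measurable fun k : ℕ => (2 : ENNReal) ^ k).comp (M.N_meas n)).aemeasurable)
      (4 ^ n)
    rw [lintegral_two_pow_N] at hmarkov
    have h4 : (4 : ENNReal) ^ n = ENNReal.ofReal (4 ^ n) := by
      rw [ENNReal.ofReal_pow (by norm_num)]; simp
    rw [div_pow, ← Real.exp_nat_mul, mul_one, ENNReal.ofReal_div_of_pos (by positivity), ← h4,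
      ENNReal.le_div_iff_mul_le (by simp) (by simp), mul_comm]
    refine le_trans ?_ hmarkov
    gcongr
    intro h
    calc (4 : ENNReal) ^ n = 2 ^ (2 * n) := by rw [pow_mul]; norm_num
      _ ≤ _ := pow_le_pow_right₀ (by norm_num) (not_le.1 h).le
  have hsum : Summable fun n : ℕ => (Real.exp 1 / 4) ^ n :=
    summable_geometric_of_lt_one (by positivity) (by linarith [Real.exp_one_lt_d9])
  have := ae_eventually_notMem (ne_top_of_le_ne_top hsum.tsum_ofReal_ne_top
    (ENNReal.tsum_le_tsum hbound))
  simpa using this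

lemma rhat_nonneg (M : Model d P) {γ : ℝ} (hγ : 0 < γ) (n : ℕ) : 0 ≤ rhat M γ n :=
  Real.rpow_nonneg (div_nonneg (mul_nonneg hγ.le (Real.log_natCast_nonneg n))
    (mul_nonneg M.α_pos.le n.cast_nonneg)) _

lemma rhat_pos (M : Model d P) {γ : ℝ} (hγ : 0 < γ) {n : ℕ} (hn : 2 ≤ n) : 0 < rhat M γ n := by
  have hα := M.α_pos
  have hlog : 0 < Real.log n := Real.log_pos (by exact_mod_cast hn)
  have hn' : (0 : ℝ) < n := by positivity
  exact Real.rpow_pos_of_pos (by positivity) _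

lemma rhat_pow (M : Model d P) {γ : ℝ} (hγ : 0 < γ) (hd : d ≠ 0) (n : ℕ) :
    rhat M γ n ^ d = γ / M.α * (Real.log n * (n : ℝ)⁻¹) := by
  rw [rhat, one_div, Real.rpow_inv_natCast_pow _ hd]
  · field_simp
  · exact div_nonneg (mul_nonneg hγ.le (Real.log_natCast_nonneg n))
      (mul_nonneg M.α_pos.le n.cast_nonneg)

lemma rhat_le_rhat (M : Model d P) {γ : ℝ} (hγ : 0 < γ) {m n : ℕ} (hm : 3 ≤ m) (hmn : m ≤ n) :
    rhat M γ n ≤ rhat M γ m := by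
  have hα := M.α_pos
  have he : Real.exp 1 ≤ m := by
    have : (3 : ℝ) ≤ m := by exact_mod_cast hm
    linarith [Real.exp_one_lt_d9]
  have hmn' : (m : ℝ) ≤ n := by exact_mod_cast hmn
  have h := Real.log_div_self_antitoneOn he (he.trans hmn') hmn'
  refine Real.rpow_le_rpow (div_nonneg (mul_nonneg hγ.le (Real.log_natCast_nonneg n))
    (mul_nonneg M.α_pos.le n.cast_nonneg)) ?_ (by positivity)
  rw [mul_div_mul_comm, mul_div_mul_comm]
  gcongr

lemma rhat_le_mul_rhat (M : Model d P) (hd : d ≠ 0) {γ : ℝ} (hγ : 0 < γ) {m n : ℕ} (hm : 1 ≤ m)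
    (hmn : m ≤ n) {l : ℝ} (hl : 1 ≤ l) (hnm : (n : ℝ) ≤ l * m) :
    rhat M γ m ≤ l * rhat M γ n := by
  have hm' : (0 : ℝ) < m := by exact_mod_cast hm
  have hn' : (0 : ℝ) < n := by exact_mod_cast hm.trans hmn
  have hα := M.α_pos
  have hlogm := Real.log_natCast_nonneg m
  refine le_of_pow_le_pow_left₀ hd (mul_nonneg (by positivity) (rhat_nonneg M hγ n)) ?_
  rw [mul_pow, rhat_pow M hγ hd, rhat_pow M hγ hd, mul_left_comm (l ^ d)]
  refine mul_le_mul_of_nonneg_left ?_ (by positivity)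
  have hinv : (m : ℝ)⁻¹ ≤ l * (n : ℝ)⁻¹ := by
    rw [← div_eq_mul_inv, le_div_iff₀ hn', inv_mul_le_iff₀ hm', mul_comm]
    exact hnm
  calc Real.log m * (m : ℝ)⁻¹ ≤ Real.log n * (l * (n : ℝ)⁻¹) := by gcongr
    _ = l * (Real.log n * (n : ℝ)⁻¹) := by ring
    _ ≤ l ^ d * (Real.log n * (n : ℝ)⁻¹) := by
        gcongr
        exact le_self_pow₀ hl hd

lemma tendsto_log_natCast : Tendsto (fun n : ℕ => Real.log n) atTop atTop :=
  Real.tendsto_log_atTop.comp tendsto_natCast_atTop_atTop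

lemma g_mul_log_isBigO (M : Model d P) {c : ℝ}
    (hg : M.g =o[atTop] fun r : ℝ => Real.exp (-(c * r))) {b : ℝ} (hb : 0 < b) :
    (fun n : ℕ => M.g (b * Real.log n)) =O[atTop] fun n : ℕ => (n : ℝ) ^ (-(c * b)) := by
  refine (hg.isBigO.comp_tendsto (tendsto_log_natCast.const_mul_atTop hb)).congr'
    EventuallyEq.rfl ?_
  filter_upwards [eventually_gt_atTop 0] with n hn
  rw [Real.rpow_def_of_pos (by exact_mod_cast hn)]
  simp only [Function.comp_apply]
  ring_nf

lemma natCast_rpow_isBigO {s t : ℝ} (hst : s ≤ t) :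
    (fun n : ℕ => (n : ℝ) ^ s) =O[atTop] fun n : ℕ => (n : ℝ) ^ t := by
  refine Asymptotics.IsBigO.of_bound 1 ?_
  filter_upwards [eventually_ge_atTop 1] with n hn
  rw [one_mul, Real.norm_of_nonneg (by positivity), Real.norm_of_nonneg (by positivity)]
  exact Real.rpow_le_rpow_of_exponent_le (by exact_mod_cast hn) hst

/-- Up to a constant, `n ^ 2 * edgeBound M γ b K D n` bounds the expected number of edges of
`G_n (rhat M γ n)` that are longer than `b * log n * rhat M γ n`. -/
def edgeBound (M : Model d P) (γ b K D : ℝ) (n : ℕ) : ℝ :=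
  M.g (b * Real.log n) * (D * (K * Real.log n * rhat M γ n) ^ d) + M.g (K * Real.log n)

lemma edgeBound_isBigO (hd : d ≠ 0) (M : Model d P) {c : ℝ} (hc : 0 < c)
    (hg : M.g =o[atTop] fun r : ℝ => Real.exp (-(c * r))) {γ : ℝ} (hγ : 0 < γ) {b : ℝ}
    (hb : 1 / c < b) (D : ℝ) :
    (fun n : ℕ => (n : ℝ) ^ 2 * edgeBound M γ b (3 / c) D n) =O[atTop]
      fun n : ℕ => (n : ℝ) ^ (-(min ((c * b - 1) / 2) 1)) := by
  have hcb : 1 < c * b := by rwa [div_lt_iff₀ hc, mul_comm] at hb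
  have hb0 : 0 < b := lt_trans (by positivity) hb
  set δ := (c * b - 1) / 2 with hδ
  have hδ0 : 0 < δ := by simp only [hδ]; linarith
  have hlog : (fun n : ℕ => Real.log n ^ (d + 1)) =O[atTop] fun n : ℕ => (n : ℝ) ^ δ := by
    have := ((isLittleO_log_rpow_rpow_atTop ((d + 1 : ℕ) : ℝ) hδ0).isBigO).comp_tendsto
      (tendsto_natCast_atTop_atTop (R := ℝ))
    simpa only [Function.comp_def, Real.rpow_natCast] using this
  have hball : (fun n : ℕ => D * (3 / c * Real.log n * rhat M γ n) ^ d) =O[atTop]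
      fun n : ℕ => (n : ℝ) ^ δ * (n : ℝ)⁻¹ := by
    have heq : (fun n : ℕ => D * (3 / c * Real.log n * rhat M γ n) ^ d) = fun n : ℕ =>
        (D * (3 / c) ^ d * (γ / M.α)) * (Real.log n ^ (d + 1) * (n : ℝ)⁻¹) := by
      ext n
      rw [mul_pow, rhat_pow M hγ hd]
      ring
    rw [heq]
    exact (hlog.mul (Asymptotics.isBigO_refl _ _)).const_mul_left _
  have hsq : (fun n : ℕ => (n : ℝ) ^ 2) =O[atTop] fun n : ℕ => (n : ℝ) ^ 2 :=
    Asymptotics.isBigO_refl _ _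
  have hshort := (hsq.mul ((g_mul_log_isBigO M hg hb0).mul hball)).congr' EventuallyEq.rfl
    (g₂ := fun n : ℕ => (n : ℝ) ^ (-δ)) <| by
      filter_upwards [eventually_gt_atTop 0] with n hn
      have hn' : (0 : ℝ) < n := by exact_mod_cast hn
      rw [← Real.rpow_natCast, ← Real.rpow_neg_one, ← Real.rpow_add hn', ← Real.rpow_add hn',
        ← Real.rpow_add hn']
      congr 1
      simp only [hδ]
      push_cast
      ring
  have hlong := (hsq.mul (g_mul_log_isBigO M hg (b := 3 / c) (by positivity))).congr'
    EventuallyEq.rfl (g₂ := fun n : ℕ => (n : ℝ) ^ (-1 : ℝ)) <| by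
      filter_upwards [eventually_gt_atTop 0] with n hn
      have hn' : (0 : ℝ) < n := by exact_mod_cast hn
      rw [← Real.rpow_natCast, ← Real.rpow_add hn', mul_div_cancel₀ _ hc.ne']
      norm_num
  refine ((hshort.trans (natCast_rpow_isBigO (neg_le_neg (min_le_left δ 1)))).add
    (hlong.trans (natCast_rpow_isBigO (neg_le_neg (min_le_right δ 1))))).congr_left fun n => ?_
  simp only [edgeBound]
  ring

/-- The union of `longEdgeEvent` over the pairs of distinct vertices in `{1, …, L}`. -/
def someLongEdge (M : Model d P) (r t T : ℝ) (L : ℕ) : Set Ω :=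
  ⋃ p ∈ (Finset.Icc 1 L ×ˢ Finset.Icc 1 L).filter fun p => p.1 ≠ p.2,
    longEdgeEvent M r t T p.1 p.2

lemma measure_someLongEdge_le [IsProbabilityMeasure P] (M : Model d P) {r t T : ℝ} (hr : 0 ≤ r)
    (ht : 0 ≤ t) (hT : 0 ≤ T) (L : ℕ) :
    P (someLongEdge M r t T L) ≤ ENNReal.ofReal ((L : ℝ) ^ 2 * (M.g t * ((shifts d).card *
      volume.real (Metric.ball (0 : EuclideanSpace ℝ (Fin d)) 1) * (T * r) ^ d) + M.g T)) := by
  set q := M.g t * ((shifts d).card *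
      volume.real (Metric.ball (0 : EuclideanSpace ℝ (Fin d)) 1) * (T * r) ^ d) + M.g T
  calc P (someLongEdge M r t T L)
      ≤ ∑ p ∈ (Finset.Icc 1 L ×ˢ Finset.Icc 1 L).filter fun p => p.1 ≠ p.2,
          P (longEdgeEvent M r t T p.1 p.2) := measure_biUnion_finset_le _ _
    _ ≤ ∑ p ∈ (Finset.Icc 1 L ×ˢ Finset.Icc 1 L).filter fun p => p.1 ≠ p.2,
          ENNReal.ofReal q := by
        refine Finset.sum_le_sum fun p hp => ?_
        simp only [Finset.mem_filter, Finset.mem_product, Finset.mem_Icc] at hp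
        exact measure_longEdgeEvent_le M hr ht hT hp.1.1.1 hp.1.2.1 hp.2
    _ ≤ ∑ p ∈ Finset.Icc 1 L ×ˢ Finset.Icc 1 L, ENNReal.ofReal q :=
        Finset.sum_le_sum_of_subset (Finset.filter_subset _ _)
    _ = ENNReal.ofReal ((L : ℝ) ^ 2 * q) := by
        rw [Finset.sum_const, Finset.card_product, Nat.card_Icc, Nat.add_sub_cancel,
          nsmul_eq_mul, ENNReal.ofReal_mul (by positivity), ENNReal.ofReal_pow (by positivity),
          ENNReal.ofReal_natCast, sq]
        push_cast
        rfl

lemma exists_ae_eventually_notMem_someLongEdge (hd : d ≠ 0) [IsProbabilityMeasure P]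
    (M : Model d P) {c : ℝ} (hc : 0 < c)
    (hg : M.g =o[atTop] fun r : ℝ => Real.exp (-(c * r))) {γ : ℝ} (hγ : 0 < γ) {b : ℝ}
    (hb : 1 / c < b) :
    ∃ m : ℕ, m ≠ 0 ∧ ∀ J : ℕ, ∀ᵐ ω ∂P, ∀ᶠ k : ℕ in atTop,
      ω ∉ someLongEdge M (rhat M γ (k ^ m)) (b * Real.log (k ^ m : ℕ))
        (3 / c * Real.log (k ^ m : ℕ)) (J * k ^ m) := by
  have hcb : 1 < c * b := by rwa [div_lt_iff₀ hc, mul_comm] at hb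
  have hb0 : 0 < b := lt_trans (by positivity) hb
  set ε := min ((c * b - 1) / 2) 1 with hε
  have hε0 : 0 < ε := lt_min (by linarith) one_pos
  obtain ⟨m, hm⟩ := exists_nat_gt (1 / ε)
  have hmε : 1 < m * ε := by rwa [div_lt_iff₀ hε0] at hm
  have hm0 : m ≠ 0 := by
    rintro rfl
    norm_num at hmε
  refine ⟨m, hm0, fun J => ae_eventually_notMem ?_⟩
  set D := (shifts d).card * volume.real (Metric.ball (0 : EuclideanSpace ℝ (Fin d)) 1) with hD
  have hO := ((edgeBound_isBigO hd M hc hg hγ hb D).comp_tendsto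
    (tendsto_pow_atTop hm0 (α := ℕ))).const_mul_left ((J : ℝ) ^ 2)
  have hsum : Summable fun k : ℕ => (J : ℝ) ^ 2 *
      (((k ^ m : ℕ) : ℝ) ^ 2 * edgeBound M γ b (3 / c) D (k ^ m)) := by
    refine summable_of_isBigO_nat (Real.summable_nat_rpow.2 (show -(m * ε) < -1 by linarith))
      (hO.congr_right fun k => ?_)
    simp only [Function.comp_apply]
    rw [Nat.cast_pow, ← Real.rpow_natCast, ← Real.rpow_mul (by positivity), mul_neg]
  refine ne_top_of_le_ne_top hsum.tsum_ofReal_ne_top (ENNReal.tsum_le_tsum fun k => ?_)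
  have hlog := Real.log_natCast_nonneg (k ^ m)
  refine (measure_someLongEdge_le M (rhat_nonneg M hγ _) (by positivity) (by positivity)
    _).trans_eq ?_
  rw [edgeBound, ← hD]
  congr 1
  push_cast
  ring

lemma tendsto_floor_root {m : ℕ} (hm : m ≠ 0) :
    Tendsto (fun n : ℕ => ⌊(n : ℝ) ^ (m : ℝ)⁻¹⌋₊) atTop atTop :=
  tendsto_nat_floor_atTop.comp
    ((tendsto_rpow_atTop (by positivity)).comp tendsto_natCast_atTop_atTop)

lemma floor_root_pow_le {m : ℕ} (hm : m ≠ 0) (n : ℕ) : ⌊(n : ℝ) ^ (m : ℝ)⁻¹⌋₊ ^ m ≤ n := by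
  have h : ((⌊(n : ℝ) ^ (m : ℝ)⁻¹⌋₊ : ℕ) : ℝ) ^ m ≤ ((n : ℝ) ^ (m : ℝ)⁻¹) ^ m := by
    gcongr
    exact Nat.floor_le (by positivity)
  rw [Real.rpow_inv_natCast_pow (by positivity) hm] at h
  exact_mod_cast h

lemma le_floor_root_add_one_pow {m : ℕ} (hm : m ≠ 0) (n : ℕ) :
    n ≤ (⌊(n : ℝ) ^ (m : ℝ)⁻¹⌋₊ + 1) ^ m := by
  have h : ((n : ℝ) ^ (m : ℝ)⁻¹) ^ m ≤ ((⌊(n : ℝ) ^ (m : ℝ)⁻¹⌋₊ : ℕ) + 1 : ℝ) ^ m := by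
    gcongr
    exact (Nat.lt_floor_add_one _).le
  rw [Real.rpow_inv_natCast_pow (by positivity) hm] at h
  exact_mod_cast h

lemma eventually_add_one_pow_le (m : ℕ) {l : ℝ} (hl : 1 < l) :
    ∀ᶠ k : ℕ in atTop, ((k : ℝ) + 1) ^ m ≤ l * (k : ℝ) ^ m := by
  have h : Tendsto (fun k : ℕ => (1 + 1 / (k : ℝ)) ^ m) atTop (nhds 1) := by
    simpa using (tendsto_one_div_atTop_nhds_zero_nat (𝕜 := ℝ)).const_add 1 |>.pow m
  filter_upwards [h.eventually_le_const hl, eventually_gt_atTop 0] with k hk hk0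
  have hk0' : (0 : ℝ) < k := by exact_mod_cast hk0
  calc ((k : ℝ) + 1) ^ m = (1 + 1 / (k : ℝ)) ^ m * (k : ℝ) ^ m := by
        rw [← mul_pow]
        congr 1
        field_simp
    _ ≤ _ := by gcongr

lemma longestEdge_le (M : Model d P) {n : ℕ} {r t : ℝ} {ω : Ω} (ht : 0 ≤ t)
    (h : ∀ i j, adj M n r ω i j → torusDist (M.X i ω) (M.X j ω) ≤ t) :
    longestEdge M n r ω ≤ t := by
  refine csSup_le ⟨0, Or.inl rfl⟩ ?_
  rintro s (rfl | ⟨i, j, hij, rfl⟩)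
  · exact ht
  · exact h i j hij

lemma longestEdge_nonneg (M : Model d P) (n : ℕ) (r : ℝ) (ω : Ω) : 0 ≤ longestEdge M n r ω := by
  refine Real.sSup_nonneg ?_
  rintro s (rfl | ⟨i, j, -, rfl⟩)
  · exact le_rfl
  · exact torusDist_nonneg _ _

lemma ae_eventually_longestEdge_le (hd : d ≠ 0) [IsProbabilityMeasure P] (M : Model d P)
    {c : ℝ} (hc : 0 < c) (hg : M.g =o[atTop] fun r : ℝ => Real.exp (-(c * r)))
    {γ : ℝ} (hγ : 0 < γ) {a : ℝ} (ha : 1 / c < a) :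
    ∀ᵐ ω ∂P, ∀ᶠ n : ℕ in atTop,
      longestEdge M n (rhat M γ n) ω / (rhat M γ n * Real.log n) ≤ a := by
  obtain ⟨b, hb, hba⟩ := exists_between ha
  have hb0 : 0 < b := lt_trans (by positivity) hb
  have hl : 1 < a / b := (one_lt_div hb0).2 hba
  obtain ⟨m, hm, hnot⟩ := exists_ae_eventually_notMem_someLongEdge hd M hc hg hγ hb
  filter_upwards [hnot (2 * 2 ^ m), ae_X_mem_cube M, ae_eventually_N_le M] with ω hω hX hN
  have hroot := tendsto_floor_root hm
  filter_upwards [hN, hroot.eventually hω, hroot.eventually (eventually_add_one_pow_le m hl),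
    hroot.eventually (eventually_ge_atTop 3), floor_root_pow_le hm |> Eventually.of_forall,
    le_floor_root_add_one_pow hm |> Eventually.of_forall] with n hNn hk hkl hk3 hkn hnk
  set k := ⌊(n : ℝ) ^ (m : ℝ)⁻¹⌋₊
  have hkm : 3 ≤ k ^ m := hk3.trans (Nat.le_self_pow hm k)
  have hn3 : 3 ≤ n := hkm.trans hkn
  have hrn := rhat_pos M hγ (show 2 ≤ n by omega)
  have hrk := rhat_pos M hγ (show 2 ≤ k ^ m by omega)
  have hlogn : 0 < Real.log n := Real.log_pos (by exact_mod_cast (show 1 < n by omega))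
  have hlogk := Real.log_natCast_nonneg (k ^ m)
  have ha0 : 0 < a := hb0.trans hba
  have hnl : (n : ℝ) ≤ a / b * (k ^ m : ℕ) := by
    refine le_trans ?_ (hkl.trans_eq (by push_cast; rfl))
    exact_mod_cast hnk
  have hJ : 2 * n ≤ 2 * 2 ^ m * k ^ m := by
    rw [mul_assoc, ← mul_pow]
    have : (k + 1) ^ m ≤ (2 * k) ^ m := Nat.pow_le_pow_left (by omega) m
    omega
  rw [div_le_iff₀ (by positivity)]
  refine longestEdge_le M (by positivity) ?_
  rintro i j ⟨hij, hi, hj, hiN, hjN, hU⟩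
  have hpair : ω ∉ longEdgeEvent M (rhat M γ (k ^ m)) (b * Real.log (k ^ m : ℕ))
      (3 / c * Real.log (k ^ m : ℕ)) i j := fun hmem => hk <| by
    simp only [someLongEdge, mem_iUnion]
    refine ⟨(i, j), ?_, hmem⟩
    simp only [Finset.mem_filter, Finset.mem_product, Finset.mem_Icc]
    exact ⟨⟨⟨hi, by omega⟩, hj, by omega⟩, hij⟩
  have hdist := torusDist_nonneg (M.X i ω) (M.X j ω)
  have hU' : M.U (min i j) (max i j) ω ≤
      M.g (torusDist (M.X i ω) (M.X j ω) / rhat M γ (k ^ m)) := by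
    refine hU.trans (M.g_antitone (div_nonneg hdist hrk.le) (div_nonneg hdist hrn.le) ?_)
    gcongr
    exact rhat_le_rhat M hγ hkm hkn
  calc torusDist (M.X i ω) (M.X j ω) ≤ b * Real.log (k ^ m : ℕ) * rhat M γ (k ^ m) :=
        torusDist_le_of_notMem_longEdgeEvent M hrk (by positivity) (by positivity) (hX i hi)
          (hX j hj) hU' hpair
    _ ≤ b * Real.log n * (a / b * rhat M γ n) := by
        gcongr
        exact rhat_le_mul_rhat M hd hγ (by omega) hkn hl.le hnl
    _ = a * (rhat M γ n * Real.log n) := by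
        field_simp

/-- Proposition 3, (pe3): a.s. `limsup L_n(γ)/(r̂_n(γ) log n) ≤ 1/c`. -/
theorem longestEdge_limsup_le (hd : 2 ≤ d) [IsProbabilityMeasure P] (M : Model d P)
    {c : ℝ} (hc : 0 < c)
    (hg : M.g =o[atTop] fun r : ℝ => Real.exp (-(c * r)))
    {γ : ℝ} (hγ : 0 < γ) :
    ∀ᵐ ω ∂P, Filter.limsup
      (fun n : ℕ => longestEdge M n (rhat M γ n) ω / (rhat M γ n * Real.log n))
        atTop ≤ 1 / c := by
  have hae : ∀ᵐ ω ∂P, ∀ p : ℕ, ∀ᶠ n : ℕ in atTop,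
      longestEdge M n (rhat M γ n) ω / (rhat M γ n * Real.log n) ≤ 1 / c + 1 / ((p : ℝ) + 1) :=
    ae_all_iff.2 fun p => ae_eventually_longestEdge_le (by omega) M hc hg hγ
      (lt_add_of_pos_right _ Nat.one_div_pos_of_nat)
  filter_upwards [hae] with ω hω
  have hcobdd : IsCoboundedUnder (· ≤ ·) atTop
      fun n : ℕ => longestEdge M n (rhat M γ n) ω / (rhat M γ n * Real.log n) :=
    IsBoundedUnder.isCoboundedUnder_le ⟨0, eventually_map.2 <| Eventually.of_forall fun n =>
      div_nonneg (longestEdge_nonneg M n _ ω)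
        (mul_nonneg (rhat_nonneg M hγ n) (Real.log_natCast_nonneg n))⟩
  refine ge_of_tendsto (x := atTop) (f := fun p : ℕ => 1 / c + 1 / ((p : ℝ) + 1)) ?_
    (Eventually.of_forall fun p => limsup_le_of_le hcobdd (hω p))
  simpa using (tendsto_one_div_add_atTop_nhds_zero_nat (𝕜 := ℝ)).const_add (1 / c)

end RCM
end
end

section
/- Suppose g(r) = o(r^{-c}) as r → ∞ for some c > d, and fix γ > 0. Let D_n(k) be the number of vertices of G_n(r̂_n(γ)) whose degree is at least k, and set k_n := α n r̂_n(γ)^d + d·(α n r̂_n(γ)^d)^{1/2}. Then E[D_n(k_n)/n] → 1 − Φ(d) as n → ∞, where Φ is the standard normal distribution function. -/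
open MeasureTheory ProbabilityTheory Filter Set

noncomputable section

namespace RCM

variable {d : ℕ} {Ω : Type*} [MeasurableSpace Ω] {P : Measure Ω}

lemma tendsto_poisson_tail {μ : ℕ → NNReal} {lam : ℕ → ℝ} (hlam : Tendsto lam atTop atTop)
    (hμ : Tendsto (fun n => ((μ n : ℝ) - lam n) / √(lam n)) atTop (nhds 0)) (x : ℝ) :
    Tendsto (fun n => (poissonMeasure (μ n)).real {k : ℕ | lam n + x * √(lam n) ≤ (k : ℝ)})
      atTop (nhds (1 - stdNormalCDF x)) := by
  have hsq : Tendsto (fun n => √(lam n)) atTop atTop := Real.tendsto_sqrt_atTop.comp hlam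
  have hpos : ∀ᶠ n in atTop, 0 < lam n := hlam.eventually_gt_atTop 0
  have hratio : Tendsto (fun n => (μ n : ℝ) / lam n) atTop (nhds 1) := by
    have h := (hμ.mul hsq.inv_tendsto_atTop).const_add 1
    simp only [mul_zero, add_zero] at h
    refine h.congr' ?_
    filter_upwards [hpos] with n hn
    have h1 : √(lam n) ≠ 0 := (Real.sqrt_pos.2 hn).ne'
    have h2 : √(lam n) * √(lam n) = lam n := Real.mul_self_sqrt hn.le
    rw [Pi.inv_apply, ← div_eq_mul_inv, div_div, h2]
    field_simp
    ring
  let ν : ℕ → ProbabilityMeasure ℝ := fun n =>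
    ⟨(((poissonMeasure (μ n)).map (Nat.cast : ℕ → ℝ)).map (fun y => (√(lam n))⁻¹ * y)).map
      (fun y => y + (-√(lam n))),
      by
        have := Measure.isProbabilityMeasure_map
          (μ := (poissonMeasure (μ n)).map (Nat.cast : ℕ → ℝ)) (f := fun y => (√(lam n))⁻¹ * y)
          (by fun_prop)
        exact Measure.isProbabilityMeasure_map (by fun_prop)⟩
  let γ0 : ProbabilityMeasure ℝ := ⟨gaussianReal 0 1, inferInstance⟩
  have hconv : Tendsto ν atTop (nhds γ0) := by
    apply ProbabilityMeasure.tendsto_of_tendsto_charFun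
    intro t
    change Tendsto (fun n => charFun ((((poissonMeasure (μ n)).map (Nat.cast : ℕ → ℝ)).map
      (fun y => (√(lam n))⁻¹ * y)).map (fun y => y + (-√(lam n)))) t) atTop
      (nhds (charFun (gaussianReal 0 1) t))
    simp_rw [charFun_map_add_const, charFun_map_mul, charFun_map_cast_poissonMeasure,
      charFun_gaussianReal, ← Complex.exp_add]
    refine (Complex.continuous_exp.tendsto _).comp ?_
    have hs : Tendsto (fun n => (√(lam n))⁻¹ * t) atTop (nhds 0) := by
      simpa using hsq.inv_tendsto_atTop.mul_const t
    have hz : Tendsto (fun n => (((√(lam n))⁻¹ * t : ℝ) : ℂ) * Complex.I) atTop (nhds 0) := by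
      have := ((Complex.continuous_ofReal.tendsto 0).comp hs).mul_const Complex.I
      simpa using this
    have hrem := (Complex.exp_sub_sum_range_succ_isLittleO_pow 2).comp_tendsto hz
    have hmain : Tendsto (fun n => (μ n : ℂ) *
        (Complex.exp ((((√(lam n))⁻¹ * t : ℝ) : ℂ) * Complex.I)
        - ∑ i ∈ Finset.range 3, ((((√(lam n))⁻¹ * t : ℝ) : ℂ) * Complex.I) ^ i / i.factorial))
        atTop (nhds 0) := by
      have h1 : (fun n => (μ n : ℂ) * (Complex.exp ((((√(lam n))⁻¹ * t : ℝ) : ℂ) * Complex.I)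
        - ∑ i ∈ Finset.range 3, ((((√(lam n))⁻¹ * t : ℝ) : ℂ) * Complex.I) ^ i / i.factorial))
        =o[atTop] (fun n => (μ n : ℂ) * ((((√(lam n))⁻¹ * t : ℝ) : ℂ) * Complex.I) ^ 2) :=
        (Asymptotics.isBigO_refl (fun n => (μ n : ℂ)) atTop).mul_isLittleO hrem
      have h2 : Tendsto (fun n => (μ n : ℂ) * ((((√(lam n))⁻¹ * t : ℝ) : ℂ) * Complex.I) ^ 2) atTop
          (nhds (((1 * (-t ^ 2) : ℝ)) : ℂ)) := by
        have h3 := (Complex.continuous_ofReal.tendsto _).comp (hratio.mul_const (-t ^ 2))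
        refine h3.congr' ?_
        filter_upwards [hpos] with n hn
        have h2 : √(lam n) ^ 2 = lam n := Real.sq_sqrt hn.le
        have h3 : (((√(lam n) : ℝ) : ℂ)) ^ 2 = (lam n : ℂ) := by rw [← h2]; push_cast; simp
        rw [Function.comp_apply, mul_pow, Complex.I_sq]
        push_cast
        rw [mul_pow, inv_pow, h3]
        ring
      have := h1.trans_isBigO (h2.isBigO_one ℂ)
      exact (Asymptotics.isLittleO_one_iff ℂ).1 this
    have hlin : Tendsto (fun n => ((((μ n : ℝ) - lam n) / √(lam n) * t : ℝ) : ℂ) * Complex.I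
        + (((μ n : ℝ) / lam n * (-t ^ 2 / 2) : ℝ) : ℂ)) atTop
        (nhds (((0 * t : ℝ) : ℂ) * Complex.I + ((1 * (-t ^ 2 / 2) : ℝ) : ℂ))) :=
      (((Complex.continuous_ofReal.tendsto _).comp (hμ.mul_const t)).mul_const _).add
        ((Complex.continuous_ofReal.tendsto _).comp (hratio.mul_const _))
    have hsum := hmain.add hlin
    have hval : (0 : ℂ) + (((0 * t : ℝ) : ℂ) * Complex.I + ((1 * (-t ^ 2 / 2) : ℝ) : ℂ))
        = (t : ℂ) * ((0 : ℝ) : ℂ) * Complex.I - ((1 : NNReal) : ℂ) * (t : ℂ) ^ 2 / 2 := by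
      push_cast; simp; ring
    rw [hval] at hsum
    refine hsum.congr' ?_
    filter_upwards [hpos] with n hn
    have h1 : ((√(lam n) : ℝ) : ℂ) ≠ 0 := by exact_mod_cast (Real.sqrt_pos.2 hn).ne'
    have h2 : √(lam n) ^ 2 = lam n := Real.sq_sqrt hn.le
    have h3 : (lam n : ℂ) = (((√(lam n) : ℝ) : ℂ)) ^ 2 := by exact_mod_cast h2.symm
    simp only [Finset.sum_range_succ, Finset.sum_range_zero, Nat.factorial]
    push_cast
    rw [h3]
    simp only [mul_pow, Complex.I_sq, conj_trivial, RCLike.inner_apply]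
    field_simp
    push_cast
    ring
  have hfr : (γ0 : Measure ℝ) (frontier (Ici x)) = 0 := by
    rw [frontier_Ici]
    exact (nullSingletonClass_gaussianReal one_ne_zero).measure_singleton x
  have hlim := ProbabilityMeasure.tendsto_measure_of_null_frontier_of_tendsto' hconv hfr
  have hlimR := (ENNReal.tendsto_toReal (measure_ne_top (γ0 : Measure ℝ) (Ici x))).comp hlim
  have hγ : ((γ0 : Measure ℝ) (Ici x)).toReal = 1 - stdNormalCDF x := by
    change (gaussianReal 0 1).real (Ici x) = _
    have h0 : (gaussianReal 0 1).real (Ici x) = 1 - (gaussianReal 0 1).real (Iio x) := by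
      rw [← compl_Iio, probReal_compl_eq_one_sub measurableSet_Iio]
    have h1 : (gaussianReal 0 1).real (Iio x) = (gaussianReal 0 1).real (Iic x) := by
      have := nullSingletonClass_gaussianReal (μ := 0) (v := 1) one_ne_zero
      exact measureReal_congr Iio_ae_eq_Iic
    rw [h0, h1, measureReal_def, gaussianReal_apply_eq_integral _ one_ne_zero,
      ENNReal.toReal_ofReal (integral_nonneg fun y => gaussianPDFReal_nonneg _ _ _), stdNormalCDF]
    congr 1
    refine integral_congr_ae (Eventually.of_forall fun t => ?_)
    simp [gaussianPDFReal]
    ring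
  rw [← hγ]
  refine hlimR.congr' ?_
  filter_upwards [hpos] with n hn
  change ((((poissonMeasure (μ n)).map (Nat.cast : ℕ → ℝ)).map (fun y => (√(lam n))⁻¹ * y)).map
      (fun y => y + (-√(lam n))) (Ici x)).toReal = _
  rw [Measure.map_apply (by fun_prop) measurableSet_Ici,
    Measure.map_apply (by fun_prop) (measurableSet_preimage (by fun_prop) measurableSet_Ici),
    Measure.map_apply (by fun_prop) (measurableSet_preimage (by fun_prop)
      (measurableSet_preimage (by fun_prop) measurableSet_Ici)), measureReal_def]
  congr 2
  ext k
  have h1 : 0 < √(lam n) := Real.sqrt_pos.2 hn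
  have h2 : √(lam n) * √(lam n) = lam n := Real.mul_self_sqrt hn.le
  simp only [mem_preimage, mem_Ici, mem_ofPred_eq]
  rw [← sub_eq_add_neg, le_sub_iff_add_le, inv_mul_eq_div, le_div_iff₀ h1, add_mul, h2, add_comm]

open scoped unitInterval in
lemma poisson_thinning_singleton (r : NNReal) (p : I) (k : ℕ) :
    ∑' l : ℕ, poissonMeasure r {l} * binomial l p {k} =
      poissonMeasure (r * unitInterval.toNNReal p) {k} := by
  simp_rw [poissonMeasure_singleton, binomial_singleton]
  have hp0 : (0 : ℝ) ≤ p := p.2.1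
  have hp1 : (0 : ℝ) ≤ 1 - p := sub_nonneg.2 p.2.2
  have hr : (0 : ℝ) ≤ r := r.2
  have hnn : ∀ l : ℕ, 0 ≤ Real.exp (-(r : ℝ)) * (r : ℝ) ^ l / l.factorial *
      ((l.choose k : ℝ) * (p : ℝ) ^ k * (1 - (p : ℝ)) ^ (l - k)) := fun l => by positivity
  have hS : HasSum (fun l : ℕ => Real.exp (-(r : ℝ)) * (r : ℝ) ^ l / l.factorial *
      ((l.choose k : ℝ) * (p : ℝ) ^ k * (1 - (p : ℝ)) ^ (l - k)))
      (Real.exp (-((r : ℝ) * p)) * ((r : ℝ) * p) ^ k / k.factorial) := by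
    have hinj : Function.Injective (fun j : ℕ => j + k) := add_left_injective k
    rw [← hinj.hasSum_iff]
    · have h := (NormedSpace.expSeries_div_hasSum_exp ((r : ℝ) * (1 - p))).mul_left
        (Real.exp (-(r : ℝ)) * ((r : ℝ) * p) ^ k / k.factorial)
      rw [← Real.exp_eq_exp_ℝ] at h
      convert! h using 1
      · ext j
        simp only [Function.comp_apply, Nat.add_sub_cancel]
        have h2 : (((j + k).choose k : ℕ) : ℝ) * k.factorial * j.factorial = (j + k).factorial := by
          have h3 := Nat.choose_mul_factorial_mul_factorial (Nat.le_add_left k j)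
          rw [Nat.add_sub_cancel] at h3
          exact_mod_cast h3
        rw [← h2, mul_pow (r : ℝ) (1 - p)]
        have : (((j + k).choose k : ℕ) : ℝ) ≠ 0 := by
          exact_mod_cast (Nat.choose_pos (Nat.le_add_left k j)).ne'
        field_simp
        ring
      · rw [show -((r : ℝ) * p) = -(r : ℝ) + (r : ℝ) * (1 - p) by ring, Real.exp_add]
        ring
    · intro l hl
      have : l < k := by
        by_contra h
        exact hl ⟨l - k, by simp; omega⟩
      simp [Nat.choose_eq_zero_of_lt this]
  have hmul : ∀ l : ℕ, ENNReal.ofReal (Real.exp (-(r : ℝ)) * (r : ℝ) ^ l / l.factorial) *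
      ENNReal.ofReal ((l.choose k : ℝ) * (p : ℝ) ^ k * (1 - (p : ℝ)) ^ (l - k)) =
      ENNReal.ofReal (Real.exp (-(r : ℝ)) * (r : ℝ) ^ l / l.factorial *
      ((l.choose k : ℝ) * (p : ℝ) ^ k * (1 - (p : ℝ)) ^ (l - k))) := fun l =>
    (ENNReal.ofReal_mul (by positivity)).symm
  simp_rw [hmul]
  rw [← ENNReal.ofReal_tsum_of_nonneg hnn hS.summable, hS.tsum_eq]
  simp

open scoped unitInterval in
lemma poisson_thinning (r : NNReal) (p : I) (s : Set ℕ) :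
    ∑' l : ℕ, poissonMeasure r {l} * binomial l p s =
      poissonMeasure (r * unitInterval.toNNReal p) s := by
  have h : ∀ (ν : Measure ℕ), ν s = ∑' k, s.indicator (fun k => ν {k}) k := fun ν => by
    rw [← Measure.tsum_indicator_apply_singleton ν s (MeasurableSet.of_discrete)]
  rw [h (poissonMeasure _)]
  simp_rw [h (binomial _ p), ← ENNReal.tsum_mul_left]
  rw [ENNReal.tsum_comm]
  refine tsum_congr fun k => ?_
  by_cases hk : k ∈ s
  · simp only [indicator_of_mem hk, poisson_thinning_singleton]
  · simp [indicator_of_notMem hk]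

open scoped unitInterval in
lemma poisson_size_biased_thinning (n : ℕ) (p : I) (s : Set ℕ) :
    ∑' m : ℕ, (m : ENNReal) * (poissonMeasure n {m} * binomial (m - 1) p s) =
      n * poissonMeasure (n * unitInterval.toNNReal p) s := by
  rw [tsum_eq_zero_add' ENNReal.summable, ← poisson_thinning, ← ENNReal.tsum_mul_left]
  simp only [Nat.cast_zero, zero_mul, zero_add, Nat.add_sub_cancel, ← mul_assoc]
  refine tsum_congr fun l => ?_
  congr 1
  simp only [poissonMeasure_singleton]
  rw [← ENNReal.ofReal_natCast, ← ENNReal.ofReal_natCast,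
    ← ENNReal.ofReal_mul (by positivity), ← ENNReal.ofReal_mul (by positivity)]
  congr 1
  rw [Nat.factorial_succ]
  push_cast
  field_simp
  ring

/-- The integer lattice of `EuclideanSpace ℝ (Fin d)`, as the range of an additive map. -/
def latticeHom (d : ℕ) : (Fin d → ℤ) →+ EuclideanSpace ℝ (Fin d) where
  toFun z := (WithLp.equiv 2 (Fin d → ℝ)).symm (fun i => (z i : ℝ))
  map_zero' := by ext i; simp
  map_add' a b := by ext i; simp

lemma latticeHom_apply (z : Fin d → ℤ) (i : Fin d) : latticeHom d z i = z i := rfl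

lemma torusDist_eq (x y : EuclideanSpace ℝ (Fin d)) :
    torusDist x y = ⨅ z : Fin d → ℤ, ‖x - y - latticeHom d z‖ := rfl

lemma torusDist_lattice_add_right (x y : EuclideanSpace ℝ (Fin d)) (z : Fin d → ℤ) :
    torusDist x (latticeHom d z + y) = torusDist x y := by
  rw [torusDist_eq, torusDist_eq]
  refine (Equiv.addRight z).iInf_congr fun w => ?_
  rw [Equiv.coe_addRight, map_add]
  congr 1
  abel

lemma torusDist_add_left_cancel (x w : EuclideanSpace ℝ (Fin d)) :
    torusDist x (x + w) = torusDist 0 w := by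
  rw [torusDist_eq, torusDist_eq]
  congr! 3
  abel

lemma torusDist_zero_of_mem_cube {w : EuclideanSpace ℝ (Fin d)} (hw : w ∈ cube d) :
    torusDist 0 w = ‖w‖ := by
  rw [torusDist_eq]
  apply le_antisymm
  · refine (ciInf_le ⟨0, ?_⟩ (0 : Fin d → ℤ)).trans_eq (by simp)
    rintro _ ⟨z, rfl⟩
    exact norm_nonneg _
  · refine le_ciInf fun z => ?_
    rw [EuclideanSpace.norm_eq, EuclideanSpace.norm_eq]
    refine Real.sqrt_le_sqrt (Finset.sum_le_sum fun i _ => ?_)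
    simp only [zero_sub, PiLp.sub_apply, PiLp.neg_apply, latticeHom_apply, Real.norm_eq_abs, sq_abs]
    obtain ⟨h1, h2⟩ := hw i
    rcases lt_trichotomy (z i) 0 with h | h | h
    · have h' : (z i : ℝ) ≤ -1 := by exact_mod_cast (show z i ≤ -1 by omega)
      nlinarith
    · simp [h]
    · have h' : (1 : ℝ) ≤ z i := by exact_mod_cast h
      nlinarith

lemma measurable_torusDist {β : Type*} [MeasurableSpace β] {f g : β → EuclideanSpace ℝ (Fin d)}
    (hf : Measurable f) (hg : Measurable g) : Measurable fun b => torusDist (f b) (g b) := by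
  unfold torusDist
  exact Measurable.iInf fun z => by fun_prop

lemma measurableSet_cube : MeasurableSet (cube d) := by
  have : cube d = ⋂ i : Fin d, (fun x : EuclideanSpace ℝ (Fin d) => x i) ⁻¹'
      Set.Ioc (-(1/2) : ℝ) (1/2) := by
    ext x; simp [cube]
  rw [this]
  exact MeasurableSet.iInter fun i => measurableSet_preimage (by fun_prop) measurableSet_Ioc

lemma isAddFundamentalDomain_cube :
    IsAddFundamentalDomain (latticeHom d).range (cube d)
      (volume : Measure (EuclideanSpace ℝ (Fin d))) := by
  refine IsAddFundamentalDomain.mk' measurableSet_cube.nullMeasurableSet fun x => ?_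
  have h : ∀ i, ∃! m : ℤ, x i + m • (1 : ℝ) ∈ Set.Ioc (-(1/2) : ℝ) (-(1/2) + 1) := fun i =>
    existsUnique_add_zsmul_mem_Ioc one_pos (x i) (-(1/2))
  choose z hz hu using h
  refine ⟨⟨latticeHom d z, z, rfl⟩, fun i => ?_, ?_⟩
  · have := hz i
    change latticeHom d z i + x i ∈ _
    rw [latticeHom_apply]
    simp only [zsmul_eq_mul, mul_one, mem_Ioc] at this ⊢
    constructor <;> linarith [this.1, this.2]
  · rintro ⟨_, w, rfl⟩ hw
    congr 2
    ext i
    refine hu i (w i) ?_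
    have := hw i
    change latticeHom d w i + x i ∈ _ at this
    rw [latticeHom_apply] at this
    simp only [zsmul_eq_mul, mul_one, mem_Ioc] at this ⊢
    constructor <;> linarith [this.1, this.2]

open scoped Pointwise in
/-- Translation invariance on the torus. -/
lemma setLIntegral_cube_torusDist (F : ℝ → ENNReal) (x : EuclideanSpace ℝ (Fin d)) :
    ∫⁻ y in cube d, F (torusDist x y) = ∫⁻ w in cube d, F ‖w‖ := by
  have : Countable (latticeHom d).range := by
    exact (Set.countable_range (latticeHom d)).to_subtype
  have h1 : IsAddFundamentalDomain (latticeHom d).range (x +ᵥ cube d)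
      (volume : Measure (EuclideanSpace ℝ (Fin d))) :=
    isAddFundamentalDomain_cube.vadd_of_comm x
  rw [isAddFundamentalDomain_cube.setLIntegral_eq h1]
  · simp only [← image_vadd, vadd_eq_add]
    rw [← (measurePreserving_add_left volume x).setLIntegral_comp_emb
      (measurableEmbedding_addLeft x)]
    refine setLIntegral_congr_fun measurableSet_cube fun w hw => ?_
    simp only [torusDist_add_left_cancel, torusDist_zero_of_mem_cube hw]
  · rintro ⟨_, z, rfl⟩ y
    change F (torusDist x (latticeHom d z + y)) = _
    rw [torusDist_lattice_add_right]

/-- The probability that a given vertex is joined to an independent uniform vertex. -/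
def connProb (M : Model d P) (r : ℝ) : ℝ := ∫ w in cube d, M.g (‖w‖ / r)

lemma exists_measurable_eq_g (M : Model d P) :
    ∃ h : ℝ → ℝ, Measurable h ∧ (∀ t, h t ∈ Set.Icc (0 : ℝ) 1) ∧ ∀ t, 0 ≤ t → h t = M.g t := by
  refine ⟨fun t => M.g (max t 0), ?_, fun t => M.g_mem _ (le_max_right _ _), fun t ht => ?_⟩
  · refine Antitone.measurable fun s t hst => ?_
    exact M.g_antitone (Set.mem_Ici.2 (le_max_right _ _)) (Set.mem_Ici.2 (le_max_right _ _))
       (max_le_max_right 0 hst)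
  · simp only [max_eq_left ht]

lemma integral_g_norm_div (M : Model d P) {r : ℝ} (hr : 0 < r) :
    Integrable (fun w : EuclideanSpace ℝ (Fin d) => M.g (‖w‖ / r)) ∧
      ∫ w : EuclideanSpace ℝ (Fin d), M.g (‖w‖ / r) = M.α * r ^ d := by
  have h : (fun w : EuclideanSpace ℝ (Fin d) => M.g (‖w‖ / r)) =
      fun w => (fun u : EuclideanSpace ℝ (Fin d) => M.g ‖u‖) (r⁻¹ • w) := by
    ext w
    simp only [norm_smul, norm_inv, Real.norm_eq_abs, abs_of_pos hr, div_eq_inv_mul]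
  rw [h]
  refine ⟨M.g_integrable.comp_smul (inv_ne_zero hr.ne'), ?_⟩
  rw [Measure.integral_comp_smul volume (fun u : EuclideanSpace ℝ (Fin d) => M.g ‖u‖),
    ← M.α_def, finrank_euclideanSpace_fin, inv_pow, inv_inv, abs_of_pos (pow_pos hr d), smul_eq_mul,
    mul_comm]

lemma half_le_norm_of_notMem_cube {w : EuclideanSpace ℝ (Fin d)} (hw : w ∉ cube d) :
    1 / 2 ≤ ‖w‖ := by
  simp only [cube, Set.mem_ofPred_eq, not_forall, Set.mem_Ioc, not_and_or, not_lt, not_le] at hw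
  obtain ⟨i, hi⟩ := hw
  refine le_trans ?_ (PiLp.norm_apply_le w i)
  rw [Real.norm_eq_abs, le_abs]
  rcases hi with hi | hi
  · right; linarith
  · left; linarith

lemma exists_abs_sub_connProb_le (M : Model d P) {c : ℝ} (hc : (d : ℝ) < c)
    (hg : M.g =o[atTop] fun r : ℝ => r ^ (-c)) :
    ∃ K : ℝ, ∀ᶠ r in nhdsWithin (0 : ℝ) (Set.Ioi 0),
      |connProb M r - M.α * r ^ d| ≤ K * r ^ c := by
  have hc0 : 0 < c := (Nat.cast_nonneg d).trans_lt hc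
  obtain ⟨s, hs⟩ := eventually_atTop.1 (hg.bound one_pos)
  have hintegrable : Integrable fun w : EuclideanSpace ℝ (Fin d) => (1 + ‖w‖) ^ (-c) :=
    integrable_one_add_norm (by simpa using hc)
  refine ⟨(3 : ℝ) ^ c * ∫ w : EuclideanSpace ℝ (Fin d), (1 + ‖w‖) ^ (-c), ?_⟩
  have hev : ∀ᶠ r in nhdsWithin (0 : ℝ) (Set.Ioi 0), 2 * max s 1 ≤ r⁻¹ :=
    tendsto_inv_nhdsGT_zero.eventually_ge_atTop _
  filter_upwards [hev, self_mem_nhdsWithin] with r hr hr0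
  rw [Set.mem_Ioi] at hr0
  obtain ⟨hi, he⟩ := integral_g_norm_div M hr0
  have hsplit := integral_add_compl (measurableSet_cube (d := d)) hi
  have hdiff : connProb M r - M.α * r ^ d = -∫ w in (cube d)ᶜ, M.g (‖w‖ / r) := by
    rw [← he, ← hsplit, connProb]; ring
  have hnn : ∀ w : EuclideanSpace ℝ (Fin d), 0 ≤ M.g (‖w‖ / r) := fun w =>
    (M.g_mem _ (by positivity)).1
  rw [hdiff, abs_neg, abs_of_nonneg (integral_nonneg hnn)]
  calc ∫ w in (cube d)ᶜ, M.g (‖w‖ / r)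
      ≤ ∫ w in (cube d)ᶜ, (3 : ℝ) ^ c * r ^ c * (1 + ‖w‖) ^ (-c) := by
        refine setIntegral_mono_on hi.integrableOn (hintegrable.const_mul _).integrableOn
          measurableSet_cube.compl fun w hw => ?_
        have hw' := half_le_norm_of_notMem_cube hw
        have hw0 : 0 < ‖w‖ := by linarith
        have hle : s ≤ ‖w‖ / r := by
          have h1 : max s 1 ≤ ‖w‖ * r⁻¹ := by
            have h2 : 0 ≤ r⁻¹ := by positivity
            nlinarith
          rw [div_eq_mul_inv]
          exact (le_max_left _ _).trans h1
        have h1 := hs _ hle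
        rw [one_mul, Real.norm_of_nonneg (hnn w), Real.norm_of_nonneg (by positivity)] at h1
        refine h1.trans ?_
        rw [← Real.mul_rpow (by norm_num) hr0.le, Real.rpow_neg (by positivity),
          Real.rpow_neg (by positivity), ← div_eq_mul_inv, ← Real.div_rpow (by positivity)
          (by positivity), ← Real.inv_rpow (by positivity)]
        refine Real.rpow_le_rpow (by positivity) ?_ hc0.le
        rw [inv_div, div_le_div_iff₀ hw0 (by positivity)]
        nlinarith
    _ ≤ ∫ w : EuclideanSpace ℝ (Fin d), (3 : ℝ) ^ c * r ^ c * (1 + ‖w‖) ^ (-c) :=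
        setIntegral_le_integral (hintegrable.const_mul _)
          (Eventually.of_forall fun w => by positivity)
    _ = _ := by rw [integral_const_mul]; ring

lemma isProbabilityMeasure_restrict_cube [IsProbabilityMeasure P] (M : Model d P) :
    IsProbabilityMeasure (volume.restrict (cube d)) := by
  rw [← M.X_unif 1 le_rfl]
  exact Measure.isProbabilityMeasure_map (M.X_meas 1).aemeasurable

lemma connProb_mem_unitInterval [IsProbabilityMeasure P] (M : Model d P) {r : ℝ} (hr : 0 < r) :
    connProb M r ∈ unitInterval := by
  have := isProbabilityMeasure_restrict_cube M
  have hnn : ∀ w : EuclideanSpace ℝ (Fin d), M.g (‖w‖ / r) ∈ Set.Icc (0 : ℝ) 1 := fun w =>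
    M.g_mem _ (by positivity)
  refine ⟨integral_nonneg fun w => (hnn w).1, ?_⟩
  have h := integral_mono (μ := volume.restrict (cube d))
    (integral_g_norm_div M hr).1.integrableOn (integrable_const (1 : ℝ)) fun w => (hnn w).2
  simpa [connProb] using h

lemma setLIntegral_g_torusDist [IsProbabilityMeasure P] (M : Model d P) {r : ℝ} (hr : 0 < r)
    (x : EuclideanSpace ℝ (Fin d)) :
    ∫⁻ y in cube d, ENNReal.ofReal (M.g (torusDist x y / r)) =
      ENNReal.ofReal (connProb M r) := by
  rw [setLIntegral_cube_torusDist (fun t => ENNReal.ofReal (M.g (t / r))), connProb,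
    ofReal_integral_eq_lintegral_ofReal (integral_g_norm_div M hr).1.integrableOn]
  exact Eventually.of_forall fun w => (M.g_mem _ (by positivity)).1

lemma alpha_mul_rhat_pow (hd : 2 ≤ d) (M : Model d P) {γ : ℝ} (hγ : 0 < γ) {n : ℕ} (hn : 2 ≤ n) :
    0 < rhat M γ n ∧ M.α * n * rhat M γ n ^ d = γ * Real.log n := by
  have hn' : (1 : ℝ) < n := by exact_mod_cast hn
  have hlog : 0 < Real.log n := Real.log_pos hn'
  have hα := M.α_pos
  have hx : 0 < γ * Real.log n / (M.α * n) := by positivity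
  refine ⟨Real.rpow_pos_of_pos hx _, ?_⟩
  rw [rhat, one_div, Real.rpow_inv_natCast_pow hx.le (by omega)]
  field_simp

lemma tendsto_gamma_log {γ : ℝ} (hγ : 0 < γ) :
    Tendsto (fun n : ℕ => γ * Real.log n) atTop atTop :=
  (Real.tendsto_log_atTop.comp tendsto_natCast_atTop_atTop).const_mul_atTop hγ

lemma tendsto_rhat (hd : 2 ≤ d) (M : Model d P) {γ : ℝ} (hγ : 0 < γ) :
    Tendsto (rhat M γ) atTop (nhdsWithin 0 (Set.Ioi 0)) := by
  have hd0 : (0 : ℝ) < d := by exact_mod_cast (show 0 < d by omega)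
  refine tendsto_nhdsWithin_iff.2 ⟨?_, ?_⟩
  · have h1 : Tendsto (fun n : ℕ => Real.log n / n) atTop (nhds 0) :=
      (Real.isLittleO_log_id_atTop.tendsto_div_nhds_zero).comp tendsto_natCast_atTop_atTop
    have h2 : Tendsto (fun n : ℕ => γ * Real.log n / (M.α * n)) atTop (nhds 0) := by
      have := h1.const_mul (γ / M.α)
      rw [mul_zero] at this
      exact this.congr fun n => by rw [div_mul_div_comm]
    have h3 := h2.rpow_const (p := 1 / (d : ℝ)) (Or.inr (by positivity))
    rwa [Real.zero_rpow (by positivity)] at h3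
  · filter_upwards [eventually_ge_atTop 2] with n hn
    exact (alpha_mul_rhat_pow hd M hγ hn).1

lemma tendsto_mul_rhat_rpow (hd : 2 ≤ d) (M : Model d P) {c : ℝ} (hc : (d : ℝ) < c) {γ : ℝ}
    (hγ : 0 < γ) : Tendsto (fun n : ℕ => (n : ℝ) * rhat M γ n ^ c) atTop (nhds 0) := by
  have hd0 : (0 : ℝ) < d := by exact_mod_cast (show 0 < d by omega)
  have hα := M.α_pos
  have hs : 0 < c / d - 1 := by rw [sub_pos, lt_div_iff₀ hd0]; linarith
  have h1 := ((isLittleO_log_rpow_rpow_atTop (c / d) hs).tendsto_div_nhds_zero).comp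
    tendsto_natCast_atTop_atTop
  have h2 := h1.const_mul ((γ / M.α) ^ (c / d))
  rw [mul_zero] at h2
  refine h2.congr' ?_
  filter_upwards [eventually_ge_atTop 2] with n hn
  have hn' : (1 : ℝ) < n := by exact_mod_cast hn
  have hn0 : (0 : ℝ) < n := by linarith
  have hlog : 0 < Real.log n := Real.log_pos hn'
  have hx : 0 < γ * Real.log n / (M.α * n) := by positivity
  rw [Function.comp_apply, rhat, ← Real.rpow_mul hx.le, one_div_mul_eq_div, mul_div_mul_comm,
    Real.mul_rpow (by positivity) (by positivity), Real.div_rpow hlog.le hn0.le,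
    Real.rpow_sub_one hn0.ne']
  field_simp

lemma tendsto_mean_error (hd : 2 ≤ d) (M : Model d P) {c : ℝ} (hc : (d : ℝ) < c)
    (hg : M.g =o[atTop] fun r : ℝ => r ^ (-c)) {γ : ℝ} (hγ : 0 < γ) :
    Tendsto (fun n : ℕ => ((n : ℝ) * connProb M (rhat M γ n) - γ * Real.log n) /
      √(γ * Real.log n)) atTop (nhds 0) := by
  obtain ⟨K, hK⟩ := exists_abs_sub_connProb_le M hc hg
  have hK' := (tendsto_rhat hd M hγ).eventually hK
  have h1 := (tendsto_mul_rhat_rpow hd M hc hγ).const_mul K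
  rw [mul_zero] at h1
  refine squeeze_zero_norm' ?_ h1
  filter_upwards [hK', eventually_ge_atTop 2,
    (tendsto_gamma_log hγ).eventually_ge_atTop 1] with n hn hn2 hlog
  rw [← (alpha_mul_rhat_pow hd M hγ hn2).2] at hlog ⊢
  rw [norm_div, Real.norm_of_nonneg (Real.sqrt_nonneg _)]
  refine (div_le_self (norm_nonneg _) (Real.one_le_sqrt.2 hlog)).trans ?_
  rw [show (n : ℝ) * connProb M (rhat M γ n) - M.α * n * rhat M γ n ^ d =
    n * (connProb M (rhat M γ n) - M.α * rhat M γ n ^ d) by ring, norm_mul,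
    Real.norm_natCast, Real.norm_eq_abs]
  calc (n : ℝ) * _ ≤ n * (K * rhat M γ n ^ c) := by gcongr
    _ = _ := by ring

/-- The edge variable attached to the unordered pair `{i, j}`. -/
def edgeVar (M : Model d P) (i j : ℕ) (ω : Ω) : ℝ := M.U (min i j) (max i j) ω

lemma indepFun_position_edge (M : Model d P) :
    IndepFun (fun ω (i : ℕ) => M.X i ω) (fun ω (p : ℕ × ℕ) => M.U p.1 p.2 ω) P :=
  M.families_indep.indep (show (0 : Fin 3) ≠ 2 by decide)

lemma indepFun_position_edge_size (M : Model d P) (n : ℕ) :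
    IndepFun (fun ω => ((fun i : ℕ => M.X i ω), (fun p : ℕ × ℕ => M.U p.1 p.2 ω))) (M.N n) P := by
  have hX : Measurable fun ω (i : ℕ) => M.X i ω := measurable_pi_lambda _ M.X_meas
  have hN : Measurable fun ω (k : ℕ) => M.N k ω := measurable_pi_lambda _ M.N_meas
  have hU : Measurable fun ω (p : ℕ × ℕ) => M.U p.1 p.2 ω :=
    measurable_pi_lambda _ fun p => M.U_meas p.1 p.2
  have h := indep_iSup_of_disjoint (fun k => by
    fin_cases k
    · exact hX.comap_le
    · exact hN.comap_le
    · exact hU.comap_le) M.families_indep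
    (show Disjoint ({0, 2} : Set (Fin 3)) {1} by simp)
  simp only [iSup_insert, iSup_singleton] at h
  have h' : IndepFun (fun ω => ((fun i : ℕ => M.X i ω), (fun p : ℕ × ℕ => M.U p.1 p.2 ω)))
      (fun ω (k : ℕ) => M.N k ω) P := by
    rw [IndepFun_iff_Indep, show MeasurableSpace.comap (fun ω => ((fun i : ℕ => M.X i ω),
      (fun p : ℕ × ℕ => M.U p.1 p.2 ω))) Prod.instMeasurableSpace = _ from
      MeasurableSpace.comap_prodMk _ _]
    exact h
  exact h'.comp measurable_id (measurable_pi_apply n)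

/-- Joint law of a position, the other positions and the edge variables linking them. -/
lemma map_position_edges [IsProbabilityMeasure P] (M : Model d P) {i : ℕ} (hi : 1 ≤ i)
    {T : Finset ℕ} (hT : ∀ j ∈ T, 1 ≤ j) (hiT : i ∉ T) :
    P.map (fun ω => (M.X i ω, fun j : T => (M.X j ω, edgeVar M i j ω))) =
      (volume.restrict (cube d)).prod (Measure.pi fun _ : T =>
        (volume.restrict (cube d)).prod (volume.restrict (Set.Icc (0 : ℝ) 1))) := by
  have := isProbabilityMeasure_restrict_cube M
  have hXm : ∀ j, Measurable (M.X j) := M.X_meas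
  have hVm : ∀ j, Measurable (edgeVar M i j) := fun j => M.U_meas _ _
  have hXi : IndepFun (M.X i) (fun ω (j : T) => M.X j ω) P := by
    have h := M.X_indep.indepFun_finset {⟨i, hi⟩} (T.subtype (1 ≤ ·))
      (by simp [hiT]) (fun j => hXm j)
    have hφ : Measurable fun f : ({⟨i, hi⟩} : Finset {k : ℕ // 1 ≤ k}) →
        EuclideanSpace ℝ (Fin d) => f ⟨⟨i, hi⟩, by simp⟩ := measurable_pi_apply _
    have hψ : Measurable fun (f : (T.subtype (1 ≤ ·)) → EuclideanSpace ℝ (Fin d)) (j : T) =>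
        f ⟨⟨j, hT j j.2⟩, by simp⟩ := measurable_pi_lambda _ fun j => measurable_pi_apply _
    exact h.comp hφ hψ
  have hXT : iIndepFun (fun j : T => M.X j) P :=
    M.X_indep.precomp (g := fun j : T => (⟨j, hT j j.2⟩ : {k : ℕ // 1 ≤ k}))
      fun a b hab => Subtype.ext (congrArg (fun z : {k : ℕ // 1 ≤ k} => (z : ℕ)) hab)
  have hne : ∀ j : T, (j : ℕ) ≠ i := fun j h => hiT (h ▸ j.2)
  have hVT : iIndepFun (fun j : T => edgeVar M i j) P :=
    M.U_indep.precomp (g := fun j : T => (⟨(min i j, max i j), by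
        have := hne j; have := hT j j.2; simp only; omega⟩ :
        {p : ℕ × ℕ // 1 ≤ p.1 ∧ p.1 < p.2}))
      fun a b hab => by
        have h1 := congrArg (fun z : {p : ℕ × ℕ // 1 ≤ p.1 ∧ p.1 < p.2} => (z : ℕ × ℕ)) hab
        simp only [Prod.mk.injEq] at h1
        exact Subtype.ext (by omega)
  have hXV : IndepFun (fun ω => (M.X i ω, fun j : T => M.X j ω))
      (fun ω (j : T) => edgeVar M i j ω) P :=
    (indepFun_position_edge M).comp (φ := fun f => (f i, fun j : T => f j))
      (ψ := fun f (j : T) => f (min i j, max i j)) (by fun_prop) (by fun_prop)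
  have hmV : Measurable (fun ω (j : T) => edgeVar M i j ω) :=
    measurable_pi_lambda _ fun j => hVm j
  have hmX : Measurable (fun ω (j : T) => M.X j ω) := measurable_pi_lambda _ fun j => hXm j
  have h1 : P.map (fun ω => ((M.X i ω, fun j : T => M.X j ω), fun j : T => edgeVar M i j ω)) =
      ((volume.restrict (cube d)).prod (Measure.pi fun _ : T => volume.restrict (cube d))).prod
        (Measure.pi fun _ : T => volume.restrict (Set.Icc (0 : ℝ) 1)) := by
    rw [(indepFun_iff_map_prod_eq_prod_map_map ((hXm i).prodMk hmX).aemeasurable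
      hmV.aemeasurable).1 hXV, (indepFun_iff_map_prod_eq_prod_map_map (hXm i).aemeasurable
      hmX.aemeasurable).1 hXi,
      (iIndepFun_iff_map_fun_eq_pi_map fun j : T => (hXm j).aemeasurable).1 hXT,
      (iIndepFun_iff_map_fun_eq_pi_map fun j : T => (hVm j).aemeasurable).1 hVT, M.X_unif i hi]
    have hX1 : (fun j : T => P.map (M.X j)) = fun _ => volume.restrict (cube d) :=
      funext fun j => M.X_unif _ (hT j j.2)
    have hV1 : (fun j : T => P.map (edgeVar M i j)) = fun _ => volume.restrict (Set.Icc 0 1) :=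
      funext fun j => M.U_unif _ _ (by have := hT j j.2; omega) (by have := hne j; omega)
    rw [hX1, hV1]
  have hmp := ((MeasurePreserving.id (volume.restrict (cube d))).prod
    (measurePreserving_arrowProdEquivProdArrow (EuclideanSpace ℝ (Fin d)) ℝ T
      (fun _ => volume.restrict (cube d)) (fun _ => volume.restrict (Set.Icc (0 : ℝ) 1))).symm).comp
    (measurePreserving_prodAssoc (volume.restrict (cube d))
      (Measure.pi fun _ : T => volume.restrict (cube d))
      (Measure.pi fun _ : T => volume.restrict (Set.Icc (0 : ℝ) 1)))
  rw [← hmp.map_eq, ← h1, Measure.map_map hmp.measurable (((hXm i).prodMk hmX).prodMk hmV)]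
  rfl

lemma measure_forall_edges [IsProbabilityMeasure P] (M : Model d P) {i : ℕ} (hi : 1 ≤ i)
    {T : Finset ℕ} (hT : ∀ j ∈ T, 1 ≤ j) (hiT : i ∉ T)
    {C : T → Set (EuclideanSpace ℝ (Fin d) × EuclideanSpace ℝ (Fin d) × ℝ)}
    (hC : ∀ j, MeasurableSet (C j)) :
    P {ω | ∀ j : T, (M.X i ω, M.X j ω, edgeVar M i j ω) ∈ C j} =
      ∫⁻ x in cube d, ∏ j : T, (volume.restrict (cube d)).prod
        (volume.restrict (Set.Icc (0 : ℝ) 1)) (Prod.mk x ⁻¹' C j) := by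
  have := isProbabilityMeasure_restrict_cube M
  let A : Set (EuclideanSpace ℝ (Fin d) × (T → EuclideanSpace ℝ (Fin d) × ℝ)) :=
    ⋂ j : T, (fun q => (q.1, q.2 j)) ⁻¹' C j
  have hA : MeasurableSet A :=
    MeasurableSet.iInter fun j => measurableSet_preimage (by fun_prop) (hC j)
  have hm : Measurable (fun ω => (M.X i ω, fun j : T => (M.X j ω, edgeVar M i j ω))) :=
    (M.X_meas i).prodMk (measurable_pi_lambda _ fun j => (M.X_meas j).prodMk (M.U_meas _ _))
  have h1 : {ω | ∀ j : T, (M.X i ω, M.X j ω, edgeVar M i j ω) ∈ C j} =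
      (fun ω => (M.X i ω, fun j : T => (M.X j ω, edgeVar M i j ω))) ⁻¹' A := by
    ext ω; simp [A]
  rw [h1, ← Measure.map_apply hm hA, map_position_edges M hi hT hiT, Measure.prod_apply hA]
  refine lintegral_congr fun x => ?_
  rw [← Measure.pi_pi]
  congr 1
  ext q; simp [A]

/-- The number of neighbours of `i` among `1, …, m`, for given positions and edge variables. -/
def nbrCount (h : ℝ → ℝ) (r : ℝ) (i m : ℕ) (x : ℕ → EuclideanSpace ℝ (Fin d))
    (u : ℕ × ℕ → ℝ) : ℕ :=
  open Classical in
  (((Finset.Icc 1 m).erase i).filter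
    fun j => u (min i j, max i j) ≤ h (torusDist (x i) (x j) / r)).card

lemma measurable_nbrCount {h : ℝ → ℝ} (hh : Measurable h) (r : ℝ) (i m : ℕ) :
    Measurable fun q : (ℕ → EuclideanSpace ℝ (Fin d)) × (ℕ × ℕ → ℝ) =>
      nbrCount h r i m q.1 q.2 := by
  classical
  simp only [nbrCount, Finset.card_filter]
  refine Finset.measurable_sum _ fun j _ => ?_
  refine Measurable.ite (measurableSet_le (by fun_prop) ?_) measurable_const measurable_const
  refine hh.comp ((measurable_torusDist ?_ ?_).div_const r) <;> fun_prop

lemma prod_edge_present {h : ℝ → ℝ} (hh : Measurable h) (h01 : ∀ t, h t ∈ Set.Icc (0 : ℝ) 1)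
    {r : ℝ} (x : EuclideanSpace ℝ (Fin d)) [IsProbabilityMeasure (volume.restrict (cube d))] :
    (volume.restrict (cube d)).prod (volume.restrict (Set.Icc (0 : ℝ) 1))
        {q : EuclideanSpace ℝ (Fin d) × ℝ | q.2 ≤ h (torusDist x q.1 / r)} =
      ∫⁻ y in cube d, ENNReal.ofReal (h (torusDist x y / r)) := by
  have hm : Measurable fun q : EuclideanSpace ℝ (Fin d) × ℝ => h (torusDist x q.1 / r) :=
    hh.comp ((measurable_torusDist measurable_const measurable_fst).div_const r)
  rw [Measure.prod_apply (measurableSet_le measurable_snd hm)]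
  refine lintegral_congr fun y => ?_
  have h1 : Prod.mk y ⁻¹' {q : EuclideanSpace ℝ (Fin d) × ℝ | q.2 ≤ h (torusDist x q.1 / r)} =
      Set.Iic (h (torusDist x y / r)) := by ext u; simp
  have h2 : Set.Iic (h (torusDist x y / r)) ∩ Set.Icc (0 : ℝ) 1 =
      Set.Icc 0 (h (torusDist x y / r)) := by
    ext u
    have := (h01 (torusDist x y / r)).2
    simp only [Set.mem_inter_iff, Set.mem_Iic, Set.mem_Icc]
    exact ⟨fun ⟨a, b, _⟩ => ⟨b, a⟩, fun ⟨a, b⟩ => ⟨b, a, b.trans this⟩⟩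
  rw [h1, Measure.restrict_apply measurableSet_Iic, h2, Real.volume_Icc, sub_zero]

lemma map_nbrCount [IsProbabilityMeasure P] (M : Model d P) {h : ℝ → ℝ} (hh : Measurable h)
    (h01 : ∀ t, h t ∈ Set.Icc (0 : ℝ) 1) {r : ℝ} {p : unitInterval}
    (hp : ∀ x : EuclideanSpace ℝ (Fin d),
      ∫⁻ y in cube d, ENNReal.ofReal (h (torusDist x y / r)) = ENNReal.ofReal p)
    {i m : ℕ} (hi : i ∈ Finset.Icc 1 m) :
    P.map (fun ω => nbrCount h r i m (fun j => M.X j ω) (fun q => M.U q.1 q.2 ω)) =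
      binomial (m - 1) p := by
  classical
  have := isProbabilityMeasure_restrict_cube M
  have : IsProbabilityMeasure (volume.restrict (Set.Icc (0 : ℝ) 1)) := ⟨by simp⟩
  have hp0 : (0 : ℝ) ≤ p := p.2.1
  have hp1 : (0 : ℝ) ≤ 1 - p := sub_nonneg.2 p.2.2
  set T : Finset ℕ := (Finset.Icc 1 m).erase i with hTdef
  have hcard : T.card = m - 1 := by rw [Finset.card_erase_of_mem hi]; simp
  have hT : ∀ j ∈ T, 1 ≤ j := fun j hj => (Finset.mem_Icc.1 (Finset.mem_of_mem_erase hj)).1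
  have hiT : i ∉ T := Finset.notMem_erase _ _
  have hmeas : Measurable fun ω =>
      nbrCount h r i m (fun j => M.X j ω) (fun q => M.U q.1 q.2 ω) :=
    (measurable_nbrCount hh r i m).comp ((measurable_pi_lambda _ M.X_meas).prodMk
      (measurable_pi_lambda _ fun q => M.U_meas q.1 q.2))
  have hm : MeasurableSet {q : EuclideanSpace ℝ (Fin d) × EuclideanSpace ℝ (Fin d) × ℝ |
      q.2.2 ≤ h (torusDist q.1 q.2.1 / r)} := by
    exact measurableSet_le (by fun_prop)
      (hh.comp ((measurable_torusDist measurable_fst (by fun_prop)).div_const r))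
  let F : Ω → Finset ℕ := fun ω => T.filter
    fun j => edgeVar M i j ω ≤ h (torusDist (M.X i ω) (M.X j ω) / r)
  let C : Finset ℕ → T → Set (EuclideanSpace ℝ (Fin d) × EuclideanSpace ℝ (Fin d) × ℝ) :=
    fun R j => if (j : ℕ) ∈ R then {q | q.2.2 ≤ h (torusDist q.1 q.2.1 / r)}
      else {q | q.2.2 ≤ h (torusDist q.1 q.2.1 / r)}ᶜ
  have hC : ∀ R j, MeasurableSet (C R j) := fun R j => by
    by_cases hj : (j : ℕ) ∈ R
    · simp only [C, if_pos hj]; exact hm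
    · simp only [C, if_neg hj]; exact hm.compl
  have hset : ∀ R ⊆ T, {ω | F ω = R} =
      {ω | ∀ j : T, (M.X i ω, M.X j ω, edgeVar M i j ω) ∈ C R j} := by
    intro R hR
    ext ω
    simp only [Set.mem_ofPred_eq]
    constructor
    · intro hF j
      have hj : (j : ℕ) ∈ F ω ↔ (j : ℕ) ∈ R := by rw [hF]
      simp only [F, Finset.mem_filter, j.2, true_and] at hj
      by_cases hjR : (j : ℕ) ∈ R
      · simp only [C, if_pos hjR]; exact hj.2 hjR
      · simp only [C, if_neg hjR]; exact fun hh => hjR (hj.1 hh)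
    · intro hF
      ext j
      simp only [F, Finset.mem_filter]
      by_cases hjT : j ∈ T
      · have hj := hF ⟨j, hjT⟩
        by_cases hjR : j ∈ R
        · simp only [C, if_pos hjR] at hj; exact ⟨fun _ => hjR, fun _ => ⟨hjT, hj⟩⟩
        · simp only [C, if_neg hjR] at hj
          exact ⟨fun hh => absurd hh.2 hj, fun hh => absurd hh hjR⟩
      · exact ⟨fun hh => absurd hh.1 hjT, fun hh => absurd (hR hh) hjT⟩
  have hprob : ∀ R ⊆ T, P {ω | F ω = R} =
      ENNReal.ofReal ((p : ℝ) ^ R.card * (1 - p) ^ (T.card - R.card)) := by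
    intro R hR
    have hval : ∀ x : EuclideanSpace ℝ (Fin d), ∀ j : T,
        (volume.restrict (cube d)).prod (volume.restrict (Set.Icc (0 : ℝ) 1))
          (Prod.mk x ⁻¹' C R j) = ENNReal.ofReal (if (j : ℕ) ∈ R then (p : ℝ) else 1 - p) := by
      intro x j
      have hpx := prod_edge_present hh h01 (r := r) x
      rw [hp x] at hpx
      by_cases hj : (j : ℕ) ∈ R
      · simp only [C, if_pos hj]; exact hpx
      · simp only [C, if_neg hj]
        rw [Set.preimage_compl, prob_compl_eq_one_sub (measurable_prodMk_left hm),
          ENNReal.ofReal_sub _ hp0, ENNReal.ofReal_one]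
        exact congrArg (1 - ·) hpx
    rw [hset R hR, measure_forall_edges M (Finset.mem_Icc.1 hi).1 hT hiT (hC R)]
    simp_rw [hval]
    rw [lintegral_const, measure_univ, mul_one, ← ENNReal.ofReal_prod_of_nonneg
      (fun j _ => by split_ifs <;> assumption)]
    congr 1
    rw [Finset.prod_coe_sort T (fun j => if j ∈ R then (p : ℝ) else 1 - p), Finset.prod_ite,
      Finset.prod_const, Finset.prod_const, Finset.filter_mem_eq_inter,
      Finset.inter_eq_right.2 hR, Finset.filter_notMem_eq_sdiff, Finset.card_sdiff_of_subset hR]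
  refine Measure.ext_of_singleton fun k => ?_
  rw [Measure.map_apply hmeas (measurableSet_singleton k), binomial_singleton]
  have hun : (fun ω => nbrCount h r i m (fun j => M.X j ω) (fun q => M.U q.1 q.2 ω)) ⁻¹' {k} =
      ⋃ R ∈ T.powersetCard k, {ω | F ω = R} := by
    ext ω
    have hF : nbrCount h r i m (fun j => M.X j ω) (fun q => M.U q.1 q.2 ω) = (F ω).card := by
      unfold nbrCount
      congr!
    simp only [Set.mem_preimage, Set.mem_singleton_iff, hF, Set.mem_iUnion, Set.mem_ofPred_eq,
      Finset.mem_powersetCard, exists_prop, exists_eq_right']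
    exact ⟨fun hk => ⟨Finset.filter_subset _ _, hk⟩, fun hk => hk.2⟩
  rw [hun, measure_biUnion_finset]
  · rw [Finset.sum_congr rfl fun R hR => by
      rw [hprob R (Finset.mem_powersetCard.1 hR).1, (Finset.mem_powersetCard.1 hR).2],
      Finset.sum_const, Finset.card_powersetCard, hcard, nsmul_eq_mul, mul_assoc,
      ENNReal.ofReal_mul (Nat.cast_nonneg _), ENNReal.ofReal_natCast]
  · intro R _ R' _ hne
    refine Set.disjoint_left.2 fun ω h1 h2 => hne ?_
    exact Eq.trans (Eq.symm h1) h2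
  · intro R hR
    rw [hset R (Finset.mem_powersetCard.1 hR).1]
    have : {ω | ∀ j : T, (M.X i ω, M.X j ω, edgeVar M i j ω) ∈ C R j} =
        ⋂ j : T, (fun ω => (M.X i ω, M.X j ω, edgeVar M i j ω)) ⁻¹' C R j := by
      ext ω; simp
    rw [this]
    exact MeasurableSet.iInter fun j => measurableSet_preimage
      ((M.X_meas i).prodMk ((M.X_meas j).prodMk (M.U_meas _ _))) (hC R j)

lemma deg_eq_nbrCount (M : Model d P) {h : ℝ → ℝ} (hg : ∀ t, 0 ≤ t → h t = M.g t) {r : ℝ}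
    (hr : 0 < r) (n : ℕ) (ω : Ω) {i : ℕ} (hi : i ∈ Finset.Icc 1 (M.N n ω)) :
    deg M n r ω i = nbrCount h r i (M.N n ω) (fun j => M.X j ω) (fun q => M.U q.1 q.2 ω) := by
  classical
  rw [deg, nbrCount, ← Set.ncard_coe_finset]
  congr 1
  ext j
  obtain ⟨h1, h2⟩ := Finset.mem_Icc.1 hi
  simp only [adj, Set.mem_ofPred_eq, Finset.coe_filter, Finset.mem_erase, Finset.mem_Icc,
    hg _ (div_nonneg (torusDist_nonneg (M.X i ω) (M.X j ω)) hr.le)]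
  constructor
  · rintro ⟨a, -, b, -, c, e⟩
    exact ⟨⟨a.symm, b, c⟩, e⟩
  · rintro ⟨⟨a, b, c⟩, e⟩
    exact ⟨a.symm, h1, b, h2, c, e⟩

lemma ncard_degree_eq_tsum (M : Model d P) {h : ℝ → ℝ} (hg : ∀ t, 0 ≤ t → h t = M.g t) {r : ℝ}
    (hr : 0 < r) (n : ℕ) (κ : ℝ) (ω : Ω) :
    (({i : ℕ | 1 ≤ i ∧ i ≤ M.N n ω ∧ κ ≤ (deg M n r ω i : ℝ)}.ncard : ℕ) : ENNReal) =
      ∑' m : ℕ, ∑ i ∈ Finset.Icc 1 m, ({ω | M.N n ω = m} ∩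
        {ω | κ ≤ (nbrCount h r i m (fun j => M.X j ω) (fun q => M.U q.1 q.2 ω) : ℝ)}).indicator
          (fun _ => (1 : ENNReal)) ω := by
  classical
  rw [tsum_eq_single (M.N n ω)]
  · have hset : {i : ℕ | 1 ≤ i ∧ i ≤ M.N n ω ∧ κ ≤ (deg M n r ω i : ℝ)} =
        ((Finset.Icc 1 (M.N n ω)).filter fun i => κ ≤ (nbrCount h r i (M.N n ω)
          (fun j => M.X j ω) (fun q => M.U q.1 q.2 ω) : ℝ) : Finset ℕ) := by
      ext i
      simp only [Set.mem_ofPred_eq, Finset.coe_filter]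
      constructor
      · rintro ⟨a, b, c⟩
        have hi := Finset.mem_Icc.2 ⟨a, b⟩
        exact ⟨hi, by rwa [← deg_eq_nbrCount M hg hr n ω hi]⟩
      · rintro ⟨hi, c⟩
        rw [← deg_eq_nbrCount M hg hr n ω hi] at c
        exact ⟨(Finset.mem_Icc.1 hi).1, (Finset.mem_Icc.1 hi).2, c⟩
    rw [hset, Set.ncard_coe_finset, Finset.card_filter, Nat.cast_sum]
    refine Finset.sum_congr rfl fun i _ => ?_
    simp [Set.indicator_apply]
  · intro m hm
    refine Finset.sum_eq_zero fun i _ => Set.indicator_of_notMem (fun hω => ?_) _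
    exact hm (Eq.symm hω.1)

/-- By Poisson thinning, a typical degree has a Poisson law. -/
lemma integral_degree_count [IsProbabilityMeasure P] (M : Model d P) {r : ℝ} (hr : 0 < r) {n : ℕ}
    (hn : n ≠ 0) (κ : ℝ) :
    ∫ ω, ({i : ℕ | 1 ≤ i ∧ i ≤ M.N n ω ∧ κ ≤ (deg M n r ω i : ℝ)}.ncard : ℝ) / n ∂P =
      (poissonMeasure (n * (connProb M r).toNNReal)).real {k : ℕ | κ ≤ (k : ℝ)} := by
  obtain ⟨h, hh, h01, hg⟩ := exists_measurable_eq_g M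
  let p : unitInterval := ⟨connProb M r, connProb_mem_unitInterval M hr⟩
  have hp : ∀ x : EuclideanSpace ℝ (Fin d),
      ∫⁻ y in cube d, ENNReal.ofReal (h (torusDist x y / r)) = ENNReal.ofReal p := fun x => by
    rw [← setLIntegral_g_torusDist M hr x]
    refine lintegral_congr fun y => ?_
    rw [hg _ (div_nonneg (torusDist_nonneg x y) hr.le)]
  have hfam : Measurable fun ω => ((fun j : ℕ => M.X j ω), (fun q : ℕ × ℕ => M.U q.1 q.2 ω)) :=
    (measurable_pi_lambda _ M.X_meas).prodMk (measurable_pi_lambda _ fun q => M.U_meas q.1 q.2)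
  have hcnt : ∀ i m, Measurable fun ω =>
      nbrCount h r i m (fun j => M.X j ω) (fun q => M.U q.1 q.2 ω) := fun i m =>
    (measurable_nbrCount hh r i m).comp hfam
  have hA : ∀ i m, MeasurableSet
      {ω | κ ≤ (nbrCount h r i m (fun j => M.X j ω) (fun q => M.U q.1 q.2 ω) : ℝ)} := fun i m =>
    hcnt i m (MeasurableSet.of_discrete (s := {k : ℕ | κ ≤ (k : ℝ)}))
  have hNm : ∀ m, MeasurableSet {ω | M.N n ω = m} := fun m =>
    M.N_meas n (measurableSet_singleton m)
  have hterm : ∀ m i, i ∈ Finset.Icc 1 m → P ({ω | M.N n ω = m} ∩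
      {ω | κ ≤ (nbrCount h r i m (fun j => M.X j ω) (fun q => M.U q.1 q.2 ω) : ℝ)}) =
      poissonMeasure n {m} * binomial (m - 1) p {k : ℕ | κ ≤ (k : ℝ)} := by
    intro m i hi
    have hind := ((indepFun_position_edge_size M n).comp (measurable_nbrCount hh r i m)
      measurable_id).symm.measure_inter_preimage_eq_mul {m} {k : ℕ | κ ≤ (k : ℝ)}
      (measurableSet_singleton m) MeasurableSet.of_discrete
    refine hind.trans (congrArg₂ (· * ·) ?_ ?_)
    · rw [poissonMeasure_singleton]
      have hN := M.N_poisson n m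
      simp only [NNReal.coe_natCast]
      exact hN
    · rw [← map_nbrCount M hh h01 hp hi, Measure.map_apply (hcnt i m) MeasurableSet.of_discrete]
      rfl
  have hmeas : ∀ m : ℕ, Measurable fun ω => ∑ i ∈ Finset.Icc 1 m, ({ω | M.N n ω = m} ∩
        {ω | κ ≤ (nbrCount h r i m (fun j => M.X j ω) (fun q => M.U q.1 q.2 ω) : ℝ)}).indicator
          (fun _ => (1 : ENNReal)) ω := fun m =>
    Finset.measurable_sum _ fun i _ => measurable_const.indicator ((hNm m).inter (hA i m))
  have hL : ∫⁻ ω, (({i : ℕ | 1 ≤ i ∧ i ≤ M.N n ω ∧ κ ≤ (deg M n r ω i : ℝ)}.ncard : ℕ) : ENNReal)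
      ∂P = n * poissonMeasure (n * unitInterval.toNNReal p) {k : ℕ | κ ≤ (k : ℝ)} := by
    simp_rw [ncard_degree_eq_tsum M hg hr n κ]
    rw [lintegral_tsum fun m => (hmeas m).aemeasurable, ← poisson_size_biased_thinning]
    refine tsum_congr fun m => ?_
    rw [lintegral_finsetSum _ fun i _ => measurable_const.indicator ((hNm m).inter (hA i m)),
      Finset.sum_congr rfl fun i hi => by
        rw [lintegral_indicator_const ((hNm m).inter (hA i m)), one_mul, hterm m i hi]]
    simp
  have hDm : Measurable fun ω =>
      (({i : ℕ | 1 ≤ i ∧ i ≤ M.N n ω ∧ κ ≤ (deg M n r ω i : ℝ)}.ncard : ℕ) : ENNReal) := by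
    simp_rw [ncard_degree_eq_tsum M hg hr n κ]
    exact Measurable.tsum hmeas
  have hDr : ∀ ω, ({i : ℕ | 1 ≤ i ∧ i ≤ M.N n ω ∧ κ ≤ (deg M n r ω i : ℝ)}.ncard : ℝ) =
      (({i : ℕ | 1 ≤ i ∧ i ≤ M.N n ω ∧ κ ≤ (deg M n r ω i : ℝ)}.ncard : ℕ) : ENNReal).toReal :=
    fun ω => (ENNReal.toReal_natCast _).symm
  rw [integral_div]
  simp_rw [hDr]
  rw [integral_toReal hDm.aemeasurable (Eventually.of_forall fun ω => ENNReal.natCast_lt_top _),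
    hL, ENNReal.toReal_mul, ENNReal.toReal_natCast, mul_div_cancel_left₀ _ (Nat.cast_ne_zero.2 hn)]
  have hpp : unitInterval.toNNReal p = (connProb M r).toNNReal := by
    ext
    simp [p, Real.coe_toNNReal _ (connProb_mem_unitInterval M hr).1]
  rw [hpp, measureReal_def]

/-- Proposition 4: `E[D_n(k_n)/n] → 1 - Φ(d)` where
`k_n = α n r̂_n^d + d (α n r̂_n^d)^(1/2)`. -/
theorem degree_count_tendsto (hd : 2 ≤ d) [IsProbabilityMeasure P] (M : Model d P)
    {c : ℝ} (hc : (d : ℝ) < c)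
    (hg : M.g =o[atTop] fun r : ℝ => r ^ (-c))
    {γ : ℝ} (hγ : 0 < γ) :
    Tendsto (fun n : ℕ =>
        ∫ ω, ({i : ℕ | 1 ≤ i ∧ i ≤ M.N n ω ∧
            M.α * n * rhat M γ n ^ d + d * Real.sqrt (M.α * n * rhat M γ n ^ d)
              ≤ (deg M n (rhat M γ n) ω i : ℝ)}.ncard : ℝ) / n ∂P)
      atTop (nhds (1 - stdNormalCDF d)) := by
  have hconv := tendsto_poisson_tail (μ := fun n : ℕ => n * (connProb M (rhat M γ n)).toNNReal)
    (tendsto_gamma_log hγ) ?_ (d : ℝ)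
  · refine hconv.congr' ?_
    filter_upwards [eventually_ge_atTop 2] with n hn
    obtain ⟨hr, heq⟩ := alpha_mul_rhat_pow hd M hγ hn
    rw [integral_degree_count M hr (by omega), heq]
  · refine (tendsto_mean_error hd M hc hg hγ).congr' ?_
    filter_upwards [eventually_ge_atTop 2] with n hn
    have hr := (alpha_mul_rhat_pow hd M hγ hn).1
    rw [NNReal.coe_mul, NNReal.coe_natCast, Real.coe_toNNReal _ (connProb_mem_unitInterval M hr).1]

end RCM
end
end
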